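/- arXiv:math/0204045 — 3 statements merged into one kernel-verified Lean document; each statement's English description precedes it below -/
import Mathlib

section
/- Let A ⊂ ℝ² be a finite point set in general position whose convex hull is two-dimensional and let p ∈ A be a boundary point of A such that the convex hull of A∖{p} is still two-dimensional. For every integer i ≥ 2, the number of triangulations of A in which p has degree i is at most C_{i−2} times the number of triangulations of A∖{p}, where C_m denotes the m-th Catalan number. -/
/-!
The proof constructs an injection from the triangulations of `A` in which `p` has degree `i` to the
pairs of a triangulation of `A \ {p}` and a binary tree with `i - 2` nodes.

A triangulation is handled through its set of triangles. Generic points, i.e. points off all lines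
spanned by `A`, are covered by exactly one triangle (`Tri`), and this property together with the
use of all vertices characterises triangulations (`tri_of_triangulation`, `exists_triangulation`,
`tris_inj`).

As `p` is on the boundary, the other points are linearly ordered by the angle around `p`
(`exists_theta`), so the link of `p` is a path from the first point `a₁` to the last point `z`; a
vertex of degree `i` has `i - 1` link edges (`degree_eq`). If the link has a vertex `b`, with
neighbours `a` and `d`, at which the quadrilateral `p a b d` is convex, flip the diagonal `p b`: the
link edges `a b` and `b d` are replaced by `a d` (`flip_tri`, `flip_Ed`). When no such vertex
is left, the link consists of the edges of the hull of `A \ {p}` visible from `p`, and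
deleting the triangles at `p` leaves a triangulation `G` of `A \ {p}` (`he_of_mem`, `tri_erase`).
All triangles off `p` of the original triangulation are in `G` (`exists_code`).

Undoing the flips expands the hull edges visible from `p` into the original link: an edge `a d` is
replaced by the two other sides of the triangle of `G` attached to it. The expansion of a single
edge is recorded by a binary tree whose leaves are the resulting link edges, and the trees of the
successive hull edges are joined along a right spine (`Exp`, `Dec`). The joined tree has one leaf
per link edge, hence `i - 2` nodes. Conversely `G` and the tree determine the link (`Dec.unique`), and
`G` and the link determine the triangulation, whose remaining triangles are those of `G` outside
the region around `p` bounded by the link (`subset_of_code`).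
-/

open Geometry
open scoped Classical

/-- The Euclidean plane `ℝ²`. -/
abbrev Plane : Type := EuclideanSpace ℝ (Fin 2)

/-- A triangulation of a finite point set `A ⊆ ℝ²` (whose convex hull is two-dimensional):
a geometric simplicial complex all of whose faces have at most 3 elements, whose underlying
space is the convex hull of `A`, and whose vertex set is exactly `A`. -/
def IsTriangulation (A : Finset Plane) (T : SimplicialComplex ℝ Plane) : Prop :=
  (∀ s ∈ T.faces, s.card ≤ 3) ∧
  T.space = convexHull ℝ (A : Set Plane) ∧
  T.vertices = (A : Set Plane)

/-- The degree of a vertex `p` in a triangulation `T`: the number of edges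
(faces with exactly 2 elements) of `T` containing `p`. -/
noncomputable def degree (T : SimplicialComplex ℝ Plane) (p : Plane) : ℕ :=
  Nat.card {s : Finset Plane | s ∈ T.faces ∧ s.card = 2 ∧ p ∈ s}

/-- A finite point set is in general position if no three of its points are collinear. -/
def InGeneralPosition (A : Finset Plane) : Prop :=
  ∀ x ∈ A, ∀ y ∈ A, ∀ z ∈ A, x ≠ y → y ≠ z → x ≠ z →
    ¬ Collinear ℝ ({x, y, z} : Set Plane)

namespace BoundaryCount

/-! ### Orientation determinants -/

/-- Twice the signed area of the triangle `a b c`; positive iff `a, b, c` is counterclockwise. -/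
noncomputable def D (a b c : Plane) : ℝ :=
  (b 0 - a 0) * (c 1 - a 1) - (b 1 - a 1) * (c 0 - a 0)

lemma D_rot (a b c : Plane) : D b c a = D a b c := by unfold D; ring
lemma D_swap (a b c : Plane) : D b a c = - D a b c := by unfold D; ring
lemma D_swap' (a b c : Plane) : D a c b = - D a b c := by unfold D; ring
@[simp] lemma D_aab (a b : Plane) : D a a b = 0 := by unfold D; ring
@[simp] lemma D_aba (a b : Plane) : D a b a = 0 := by unfold D; ring
@[simp] lemma D_abb (a b : Plane) : D a b b = 0 := by unfold D; ring

lemma D_add (a b c x : Plane) : D a b x + D b c x + D c a x = D a b c := by unfold D; ring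

/-- The Grassmann–Plücker relation for the four vectors `w - o`, `x - o`, `y - o`, `z - o`. -/
lemma D_pluecker (o w x y z : Plane) :
    D o w x * D o y z - D o w y * D o x z + D o w z * D o x y = 0 := by unfold D; ring

lemma D_comb (a b x y : Plane) {s t : ℝ} (h : s + t = 1) :
    D a b (s • x + t • y) = s * D a b x + t * D a b y := by
  obtain rfl : t = 1 - s := by linarith
  simp only [D, PiLp.add_apply, PiLp.smul_apply, smul_eq_mul]; ring

lemma D_nonneg_of_hull {a b x : Plane} {S : Set Plane} (h : ∀ v ∈ S, 0 ≤ D a b v)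
    (hx : x ∈ convexHull ℝ S) : 0 ≤ D a b x := by
  have hc : Convex ℝ {x | 0 ≤ D a b x} := by
    intro x hx y hy s t hs ht hst
    simp only [Set.mem_ofPred_eq] at *
    rw [D_comb a b x y hst]; positivity
  exact convexHull_min h hc hx

lemma D_nonpos_of_hull {a b x : Plane} {S : Set Plane} (h : ∀ v ∈ S, D a b v ≤ 0)
    (hx : x ∈ convexHull ℝ S) : D a b x ≤ 0 := by
  have := D_nonneg_of_hull (a := b) (b := a) (x := x) (S := S)
    (fun v hv => by rw [D_swap]; linarith [h v hv]) hx
  rw [D_swap] at this; linarith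

lemma D_zero_of_hull {a b x : Plane} {S : Set Plane} (h : ∀ v ∈ S, D a b v = 0)
    (hx : x ∈ convexHull ℝ S) : D a b x = 0 :=
  le_antisymm (D_nonpos_of_hull (fun v hv => (h v hv).le) hx)
    (D_nonneg_of_hull (fun v hv => (h v hv).ge) hx)

lemma comb3_mem {S : Set Plane} (hS : Convex ℝ S) {a b c : Plane} (ha : a ∈ S) (hb : b ∈ S)
    (hc : c ∈ S) {r s t : ℝ} (hr : 0 ≤ r) (hs : 0 ≤ s) (ht : 0 ≤ t) (h : r + s + t = 1) :
    r • a + s • b + t • c ∈ S := by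
  have := hS.sum_mem (t := (Finset.univ : Finset (Fin 3))) (w := ![r, s, t]) (z := ![a, b, c])
    (by intro i _; fin_cases i <;> simpa) (by simp [Fin.sum_univ_three, h])
    (by intro i _; fin_cases i <;> simpa)
  simpa [Fin.sum_univ_three] using this

/-- Barycentric coordinates with respect to a triangle. -/
lemma bary {a b c : Plane} (h : D a b c ≠ 0) (x : Plane) :
    x = (D b c x / D a b c) • a + (D c a x / D a b c) • b + (D a b x / D a b c) • c := by
  have e : ∀ i : Fin 2, x i * D a b c = D b c x * a i + D c a x * b i + D a b x * c i := by
    intro i; fin_cases i <;> simp [D] <;> ring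
  ext i
  simp only [PiLp.add_apply, PiLp.smul_apply, smul_eq_mul]
  have := e i
  field_simp
  linarith

lemma mem_tri {a b c x : Plane} (h : 0 < D a b c) :
    x ∈ convexHull ℝ ({a, b, c} : Set Plane) ↔ 0 ≤ D a b x ∧ 0 ≤ D b c x ∧ 0 ≤ D c a x := by
  constructor
  · intro hx
    have h2 : 0 < D b c a := by rwa [D_rot]
    have h3 : 0 < D c a b := by rwa [D_rot, D_rot]
    refine ⟨D_nonneg_of_hull ?_ hx, D_nonneg_of_hull ?_ hx, D_nonneg_of_hull ?_ hx⟩ <;>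
    · rintro v (rfl | rfl | rfl) <;> simp [*, le_of_lt]
  · rintro ⟨h1, h2, h3⟩
    rw [bary h.ne' x]
    have hs := D_add a b c x
    apply comb3_mem (convex_convexHull ℝ _) (subset_convexHull ℝ _ (by simp))
      (subset_convexHull ℝ _ (by simp)) (subset_convexHull ℝ _ (by simp)) <;> try positivity
    field_simp; linarith

lemma continuous_D (a b : Plane) : Continuous (D a b) := by
  unfold D; fun_prop

lemma collinear_of_D {a b c : Plane} (h : D a b c = 0) : Collinear ℝ ({a, b, c} : Set Plane) := by
  by_cases hab : a = b
  · subst hab; simpa using collinear_pair ℝ a c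
  rw [collinear_iff_of_mem (p₀ := a) (by simp)]
  refine ⟨b - a, ?_⟩
  rintro v (rfl | rfl | rfl)
  · exact ⟨0, by simp⟩
  · exact ⟨1, by simp⟩
  · unfold D at h
    by_cases h0 : b 0 - a 0 = 0
    · have h1 : b 1 - a 1 ≠ 0 := by
        intro h1; apply hab; ext i; fin_cases i <;> simp <;> linarith
      refine ⟨(v 1 - a 1) / (b 1 - a 1), ?_⟩
      ext i; fin_cases i <;> simp <;> field_simp <;> linarith
    · refine ⟨(v 0 - a 0) / (b 0 - a 0), ?_⟩
      ext i; fin_cases i <;> simp <;> field_simp <;> linarith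

lemma D_ne {B : Finset Plane} (hB : InGeneralPosition B) {a b c : Plane} (ha : a ∈ B) (hb : b ∈ B)
    (hc : c ∈ B) (hab : a ≠ b) (hbc : b ≠ c) (hac : a ≠ c) : D a b c ≠ 0 :=
  fun h => hB a ha b hb c hc hab hbc hac (collinear_of_D h)

lemma exists_orient {B : Finset Plane} (hB : InGeneralPosition B) {s : Finset Plane}
    (hs : s ⊆ B) (h3 : s.card = 3) : ∃ a b c, s = {a, b, c} ∧ 0 < D a b c := by
  obtain ⟨a, b, c, hab, hac, hbc, rfl⟩ := Finset.card_eq_three.1 h3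
  have ha := hs (by simp : a ∈ _)
  have hb := hs (by simp : b ∈ _)
  have hc := hs (by simp : c ∈ _)
  rcases lt_or_gt_of_ne (D_ne hB ha hb hc hab hbc hac) with h | h
  · exact ⟨a, c, b, by ext; simp; tauto, by rw [D_swap']; linarith⟩
  · exact ⟨a, b, c, rfl, h⟩

lemma ne_of_D {a b c : Plane} (h : D a b c ≠ 0) : a ≠ b ∧ b ≠ c ∧ a ≠ c := by
  refine ⟨?_, ?_, ?_⟩ <;> rintro rfl <;> simp at h

lemma indep_of_card {B : Finset Plane} (hB : InGeneralPosition B) {s : Finset Plane}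
    (hs : s ⊆ B) (h3 : s.card = 3) : AffineIndependent ℝ ((↑) : s → Plane) := by
  obtain ⟨a, b, c, hab, hac, hbc, rfl⟩ := Finset.card_eq_three.1 h3
  have := hB a (hs (by simp)) b (hs (by simp)) c (hs (by simp)) hab hbc hac
  rw [← affineIndependent_iff_not_collinear_set] at this
  have h := this.range
  have e : Set.range ![a, b, c] = ((({a, b, c} : Finset Plane)) : Set Plane) := by
    ext x; simp [eq_comm]; tauto
  rw [e] at h
  exact h

/-! ### Generic points -/

/-- A point off all lines spanned by two points of `B`. -/
def Gen (B : Finset Plane) (x : Plane) : Prop := ∀ a ∈ B, ∀ b ∈ B, a ≠ b → D a b x ≠ 0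

/-- Moving a point in the normal direction takes it off the line `a b`. -/
lemma dense_line_compl {a b : Plane} (h : a ≠ b) : Dense {x | D a b x ≠ 0} := by
  intro x
  by_cases hx : D a b x = 0
  swap
  · exact subset_closure hx
  let n : Plane := !₂[-(b 1 - a 1), b 0 - a 0]
  have hn : (b 1 - a 1) ^ 2 + (b 0 - a 0) ^ 2 ≠ 0 := by
    intro hn
    have h1 : b 1 - a 1 = 0 := by nlinarith [sq_nonneg (b 1 - a 1), sq_nonneg (b 0 - a 0)]
    have h0 : b 0 - a 0 = 0 := by nlinarith [sq_nonneg (b 1 - a 1), sq_nonneg (b 0 - a 0)]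
    apply h; ext i; fin_cases i <;> simp <;> linarith
  have hD : ∀ ε : ℝ, D a b (x + ε • n) = ε * ((b 1 - a 1) ^ 2 + (b 0 - a 0) ^ 2) := by
    intro ε
    have : D a b (x + ε • n) = D a b x + ε * ((b 1 - a 1) ^ 2 + (b 0 - a 0) ^ 2) := by
      simp [D, n]; ring
    rw [this, hx, zero_add]
  have ht : Filter.Tendsto (fun ε : ℝ => x + ε • n) (nhdsWithin 0 (Set.Ioi 0)) (nhds x) := by
    have : Continuous (fun ε : ℝ => x + ε • n) := by fun_prop
    simpa using (this.tendsto 0).mono_left nhdsWithin_le_nhds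
  refine mem_closure_of_tendsto ht ?_
  filter_upwards [self_mem_nhdsWithin] with ε hε
  rw [hD]
  exact mul_ne_zero (ne_of_gt hε) hn

lemma dense_gen (B : Finset Plane) : Dense {x | Gen B x} := by
  have hc : {q : Plane × Plane | q.1 ∈ B ∧ q.2 ∈ B ∧ q.1 ≠ q.2}.Countable :=
    ((B ×ˢ B).finite_toSet.subset (by rintro ⟨a, b⟩ h; simpa using ⟨h.1, h.2.1⟩)).countable
  have h := dense_biInter_of_isOpen (f := fun q : Plane × Plane => {x | D q.1 q.2 x ≠ 0})
    (fun q _ => isOpen_ne_fun (continuous_D q.1 q.2) continuous_const) hc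
    (fun q hq => dense_line_compl hq.2.2)
  refine h.mono ?_
  intro x hx a ha b hb hab
  exact Set.mem_iInter₂.1 hx (a, b) ⟨ha, hb, hab⟩

lemma Gen.mono {A B : Finset Plane} (h : A ⊆ B) {x : Plane} (hx : Gen B x) : Gen A x :=
  fun a ha b hb => hx a (h ha) b (h hb)

/-- A closed set that contains all generic points of the hull contains the hull. -/
lemma hull_subset_of_gen {A B : Finset Plane} (hdim : affineSpan ℝ (A : Set Plane) = ⊤)
    {K : Set Plane} (hK : IsClosed K)
    (h : ∀ x ∈ convexHull ℝ (A : Set Plane), Gen B x → x ∈ K) :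
    convexHull ℝ (A : Set Plane) ⊆ K := by
  have hne := interior_convexHull_nonempty_iff_affineSpan_eq_top.2 hdim
  have hcl := (convex_convexHull ℝ (A : Set Plane)).closure_interior_eq_closure_of_nonempty_interior hne
  intro x hx
  have hx1 : x ∈ closure (interior (convexHull ℝ (A : Set Plane))) := by
    rw [hcl]; exact subset_closure hx
  have h2 := (dense_gen B).open_subset_closure_inter
    (isOpen_interior (s := convexHull ℝ (A : Set Plane)))
  have hx3 := closure_mono h2 hx1
  rw [closure_closure] at hx3
  exact closure_minimal (fun y hy => h y (interior_subset hy.1) hy.2) hK hx3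

/-- Hulls of at most two points contain no generic point. The bound on `B` makes a singleton part of
a line spanned by `B`. -/
lemma not_gen_of_card_le_two {B : Finset Plane} (hB3 : 2 ≤ B.card) {s : Finset Plane} (hs : s ⊆ B)
    (h2 : s.card ≤ 2) {x : Plane} (hx : x ∈ convexHull ℝ (s : Set Plane)) (hg : Gen B x) :
    False := by
  obtain ⟨t, hst, htB, ht2⟩ := Finset.exists_subsuperset_card_eq hs h2 hB3
  obtain ⟨a, b, hab, rfl⟩ := Finset.card_eq_two.1 ht2
  refine hg a (htB (by simp)) b (htB (by simp)) hab (D_zero_of_hull ?_ hx)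
  intro v hv
  have := hst hv
  simp at this
  rcases this with rfl | rfl <;> simp

lemma three_le_card {A : Finset Plane} (hdim : affineSpan ℝ (A : Set Plane) = ⊤) :
    3 ≤ A.card := by
  by_contra h
  have hf : Module.finrank ℝ (vectorSpan ℝ (A : Set Plane)) = 2 := by
    rw [← direction_affineSpan, hdim, AffineSubspace.direction_top, finrank_top,
      finrank_euclideanSpace_fin]
  rcases Nat.lt_or_ge A.card 1 with h0 | h0
  · have : A = ∅ := Finset.card_eq_zero.1 (by omega)
    subst this
    rw [Finset.coe_empty, vectorSpan_empty, finrank_bot] at hf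
    omega
  · have := finrank_vectorSpan_image_finset_le ℝ (id : Plane → Plane) A (n := A.card - 1)
      (by omega)
    rw [Finset.image_id] at this
    omega

/-! ### Triangulations as sets of triangles -/

lemma indep_of_card_le {B : Finset Plane} (hB : InGeneralPosition B) (hB3 : 3 ≤ B.card)
    {s : Finset Plane} (hs : s ⊆ B) (h3 : s.card ≤ 3) :
    AffineIndependent ℝ ((↑) : s → Plane) := by
  obtain ⟨t, hst, htB, ht⟩ := Finset.exists_subsuperset_card_eq hs h3 hB3
  exact (indep_of_card hB htB ht).mono (by simpa using hst)

lemma affineSpan_tri {B : Finset Plane} (hB : InGeneralPosition B) {s : Finset Plane}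
    (hs : s ⊆ B) (h3 : s.card = 3) : affineSpan ℝ (s : Set Plane) = ⊤ := by
  have := (indep_of_card hB hs h3).affineSpan_eq_top_iff_card_eq_finrank_add_one
  rw [Subtype.range_coe] at this
  apply this.2
  rw [finrank_euclideanSpace_fin, Fintype.card_coe, h3]

/-- A point of the hull at which a functional attains its maximum over the vertices lies in the
hull of the vertices attaining it. -/
lemma hull_face {f : Plane →L[ℝ] ℝ} {u : ℝ} {s : Finset Plane} (h : ∀ v ∈ s, f v ≤ u) {z : Plane}
    (hz : z ∈ convexHull ℝ (s : Set Plane)) (hfz : f z = u) :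
    z ∈ convexHull ℝ ((s.filter (fun v => f v = u) : Finset Plane) : Set Plane) := by
  rw [Finset.mem_convexHull'] at hz ⊢
  obtain ⟨w, hw0, hw1, hwz⟩ := hz
  have hsum : ∑ v ∈ s, w v * (u - f v) = 0 := by
    simp only [mul_sub, Finset.sum_sub_distrib, ← Finset.sum_mul, hw1]
    rw [← hfz, ← hwz, map_sum]
    simp
  have hz := (Finset.sum_eq_zero_iff_of_nonneg
    (fun v hv => mul_nonneg (hw0 v hv) (by linarith [h v hv]))).1 hsum
  have h0 : ∀ v ∈ s, ¬ f v = u → w v = 0 := by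
    intro v hv hne
    rcases mul_eq_zero.1 (hz v hv) with h | h
    · exact h
    · exact absurd (by linarith) hne
  refine ⟨w, fun v hv => hw0 v (Finset.mem_filter.1 hv).1, ?_, ?_⟩
  · rw [← hw1, Finset.sum_filter_of_ne]
    intro v hv hne; by_contra hc; exact hne (h0 v hv hc)
  · rw [← hwz, Finset.sum_filter_of_ne]
    intro v hv hne; by_contra hc; exact hne (by rw [h0 v hv hc, zero_smul])

lemma D_eq_zero_of_level {f : Plane →L[ℝ] ℝ} (hf : f ≠ 0) {u : ℝ} {a b c : Plane} (ha : f a = u)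
    (hb : f b = u) (hc : f c = u) : D a b c = 0 := by
  by_contra h
  have key : ∀ x, f x = u := by
    intro x
    rw [bary h x]
    simp only [map_add, map_smul, ha, hb, hc, smul_eq_mul]
    have := D_add a b c x
    field_simp
    linear_combination u * this
  have h0 := key 0
  rw [map_zero] at h0
  apply hf; ext x; rw [key x, ← h0]; simp

/-- Triangles on general position points without common generic points meet in the hull of their
common vertices: a separating line carries at most two of the points. -/
lemma inter_hull {B : Finset Plane} (hB : InGeneralPosition B) {s t s' t' : Finset Plane}
    (hs : s ⊆ B) (ht : t ⊆ B) (hs3 : s.card = 3) (ht3 : t.card = 3)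
    (hd : ∀ x, Gen B x → x ∈ convexHull ℝ (s : Set Plane) → x ∈ convexHull ℝ (t : Set Plane) → s = t)
    (hs' : s' ⊆ s) (ht' : t' ⊆ t) :
    convexHull ℝ (s' : Set Plane) ∩ convexHull ℝ (t' : Set Plane) ⊆
      convexHull ℝ ((s' : Set Plane) ∩ t') := by
  have hB3 : 3 ≤ B.card := hs3 ▸ Finset.card_le_card hs
  have key : ∀ P Q : Finset Plane, P ⊆ B → Q ⊆ B → (P ∪ Q).card ≤ 3 →
      convexHull ℝ (P : Set Plane) ∩ convexHull ℝ (Q : Set Plane) ⊆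
      convexHull ℝ ((P : Set Plane) ∩ Q) := by
    intro P Q hP hQ h3
    have := indep_of_card_le hB hB3 (Finset.union_subset hP hQ) h3
    rw [this.convexHull_inter Finset.subset_union_left Finset.subset_union_right]
  by_cases hst : s = t
  · subst hst
    exact key s' t' (hs'.trans hs) (ht'.trans hs)
      (hs3 ▸ Finset.card_le_card (Finset.union_subset hs' ht'))
  have hints : (interior (convexHull ℝ (s : Set Plane))).Nonempty :=
    interior_convexHull_nonempty_iff_affineSpan_eq_top.2 (affineSpan_tri hB hs hs3)
  have hintt : (interior (convexHull ℝ (t : Set Plane))).Nonempty :=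
    interior_convexHull_nonempty_iff_affineSpan_eq_top.2 (affineSpan_tri hB ht ht3)
  have hcl := (convex_convexHull ℝ
    (t : Set Plane)).closure_interior_eq_closure_of_nonempty_interior hintt
  have hdisj : Disjoint (interior (convexHull ℝ (s : Set Plane))) (convexHull ℝ (t : Set Plane)) := by
    rw [Set.disjoint_left]
    intro y hys hyt
    have hy : y ∈ closure (interior (convexHull ℝ (t : Set Plane))) := by
      rw [hcl]; exact subset_closure hyt
    obtain ⟨y', hy's, hy't⟩ := mem_closure_iff.1 hy _ isOpen_interior hys
    obtain ⟨x, ⟨hxs, hxt⟩, hxg⟩ := (dense_gen B).inter_open_nonempty _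
      (isOpen_interior.inter isOpen_interior) ⟨y', hy's, hy't⟩
    exact hst (hd x hxg (interior_subset hxs) (interior_subset hxt))
  obtain ⟨f, u, hf, hfs, hft⟩ := geometric_hahn_banach_of_nonempty_interior
    (convex_convexHull ℝ _) (convex_convexHull ℝ _) hdisj hints (hintt.mono interior_subset)
  rintro z ⟨hzs, hzt⟩
  have hle : ∀ v ∈ s, f v ≤ u := fun v hv => hfs v (subset_convexHull ℝ _ hv)
  have hge : ∀ v ∈ t, u ≤ f v := fun v hv => hft v (subset_convexHull ℝ _ hv)
  have hz : f z = u := le_antisymm (hfs z (convexHull_mono (by simpa using hs') hzs))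
    (hft z (convexHull_mono (by simpa using ht') hzt))
  have h1 := hull_face (fun v hv => hle v (hs' hv)) hzs hz
  have h2 := hull_face (f := -f) (u := -u) (fun v hv => by simpa using hge v (ht' hv)) hzt
    (by simp [hz])
  simp only [neg_apply, neg_inj] at h2
  have h3 := key (s'.filter (fun v => f v = u)) (t'.filter (fun v => f v = u))
    ((Finset.filter_subset _ _).trans (hs'.trans hs))
    ((Finset.filter_subset _ _).trans (ht'.trans ht)) ?_ ⟨h1, h2⟩
  · refine convexHull_mono ?_ h3
    rintro v ⟨hv1, hv2⟩
    simp only [Finset.coe_filter, Set.mem_ofPred_eq] at hv1 hv2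
    exact ⟨hv1.1, hv2.1⟩
  · by_contra hcard
    obtain ⟨a, b, c, ha, hb, hc, hab, hac, hbc⟩ := Finset.two_lt_card_iff.1 (by omega :
      2 < (s'.filter (fun v => f v = u) ∪ t'.filter (fun v => f v = u)).card)
    have hm : ∀ v ∈ s'.filter (fun v => f v = u) ∪ t'.filter (fun v => f v = u),
        v ∈ B ∧ f v = u := by
      intro v hv
      simp only [Finset.mem_union, Finset.mem_filter] at hv
      rcases hv with hv | hv
      · exact ⟨hs (hs' hv.1), hv.2⟩
      · exact ⟨ht (ht' hv.1), hv.2⟩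
    exact D_ne hB (hm a ha).1 (hm b hb).1 (hm c hc).1 hab hbc hac
      (D_eq_zero_of_level hf (hm a ha).2 (hm b hb).2 (hm c hc).2)

/-- `F` is the set of triangles of a triangulation of `A`: the triangles have vertices in `A`,
every vertex is used, and each point of `conv A` that is generic for the ambient set `B` lies in
exactly one of them. -/
structure Tri (B A : Finset Plane) (F : Finset (Finset Plane)) : Prop where
  sub : ∀ s ∈ F, s ⊆ A
  card : ∀ s ∈ F, s.card = 3
  cov : ∀ x ∈ convexHull ℝ (A : Set Plane), Gen B x → ∃ s ∈ F, x ∈ convexHull ℝ (s : Set Plane)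
  uniq : ∀ x, Gen B x → ∀ s ∈ F, ∀ t ∈ F, x ∈ convexHull ℝ (s : Set Plane) →
    x ∈ convexHull ℝ (t : Set Plane) → s = t
  vert : ∀ a ∈ A, ∃ s ∈ F, a ∈ s

section
variable {B A : Finset Plane} {F : Finset (Finset Plane)}

lemma isClosed_union (F : Finset (Finset Plane)) :
    IsClosed {x : Plane | ∃ s ∈ F, x ∈ convexHull ℝ (s : Set Plane)} := by
  have : {x : Plane | ∃ s ∈ F, x ∈ convexHull ℝ (s : Set Plane)} =
      ⋃ s ∈ F, convexHull ℝ (s : Set Plane) := by ext; simp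
  rw [this]
  exact isClosed_biUnion_finset (fun s _ => s.finite_toSet.isClosed_convexHull ℝ)

lemma Tri.cover (h : Tri B A F) (hdim : affineSpan ℝ (A : Set Plane) = ⊤) {x : Plane}
    (hx : x ∈ convexHull ℝ (A : Set Plane)) : ∃ s ∈ F, x ∈ convexHull ℝ (s : Set Plane) :=
  hull_subset_of_gen hdim (isClosed_union F) h.cov hx

lemma Tri.inter (h : Tri B A F) (hB : InGeneralPosition B) (hAB : A ⊆ B) {s t s' t' : Finset Plane}
    (hs : s ∈ F) (ht : t ∈ F) (hs' : s' ⊆ s) (ht' : t' ⊆ t) :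
    convexHull ℝ (s' : Set Plane) ∩ convexHull ℝ (t' : Set Plane) ⊆
      convexHull ℝ ((s' : Set Plane) ∩ t') :=
  inter_hull hB ((h.sub s hs).trans hAB) ((h.sub t ht).trans hAB) (h.card s hs) (h.card t ht)
    (fun x hg hxs hxt => h.uniq x hg s hs t ht hxs hxt) hs' ht'

lemma Tri.empty (h : Tri B A F) (hB : InGeneralPosition B) (hAB : A ⊆ B) {s : Finset Plane}
    (hs : s ∈ F) {a : Plane} (ha : a ∈ A) (hx : a ∈ convexHull ℝ (s : Set Plane)) : a ∈ s := by
  obtain ⟨t, ht, hat⟩ := h.vert a ha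
  have := h.inter hB hAB hs ht (s' := s) (t' := {a}) subset_rfl (by simpa using hat)
    ⟨hx, by simp⟩
  by_contra hc
  have he : (s : Set Plane) ∩ (({a} : Finset Plane) : Set Plane) = ∅ := by
    ext y; simp; rintro hy rfl; exact hc hy
  rw [he] at this
  simp at this

/-- The triangles of a complex. -/
noncomputable def tris (A : Finset Plane) (T : SimplicialComplex ℝ Plane) :
    Finset (Finset Plane) := (A.powersetCard 3).filter (· ∈ T.faces)

lemma mem_tris {T : SimplicialComplex ℝ Plane} (hT : IsTriangulation A T) {s : Finset Plane} :
    s ∈ tris A T ↔ s ∈ T.faces ∧ s.card = 3 := by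
  simp only [tris, Finset.mem_filter, Finset.mem_powersetCard]
  refine ⟨fun h => ⟨h.2, h.1.2⟩, fun h => ⟨⟨?_, h.2⟩, h.1⟩⟩
  intro v hv
  have : v ∈ T.vertices := T.down_closed h.1 (Finset.singleton_subset_iff.2 hv) (by simp)
  rw [hT.2.2] at this
  simpa using this

lemma face_subset {T : SimplicialComplex ℝ Plane} (hT : IsTriangulation A T) {s : Finset Plane}
    (hs : s ∈ T.faces) : s ⊆ A := by
  intro v hv
  have : v ∈ T.vertices := T.down_closed hs (Finset.singleton_subset_iff.2 hv) (by simp)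
  rw [hT.2.2] at this
  simpa using this

lemma tris_cov {T : SimplicialComplex ℝ Plane} (hT : IsTriangulation A T)
    (hAB : A ⊆ B) (hB2 : 2 ≤ B.card) {x : Plane} (hx : x ∈ convexHull ℝ (A : Set Plane))
    (hg : Gen B x) : ∃ s ∈ tris A T, x ∈ convexHull ℝ (s : Set Plane) := by
  rw [← hT.2.1, SimplicialComplex.mem_space_iff] at hx
  obtain ⟨s, hs, hxs⟩ := hx
  refine ⟨s, (mem_tris hT).2 ⟨hs, ?_⟩, hxs⟩
  by_contra h3
  have := hT.1 s hs
  exact not_gen_of_card_le_two hB2 ((face_subset hT hs).trans hAB) (by omega) hxs hg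

lemma mem_of_midpoint {a b : Plane} {t : Finset Plane}
    (h : midpoint ℝ a b ∈ convexHull ℝ ((({a, b} : Finset Plane) : Set Plane) ∩ t)) : a ∈ t := by
  by_contra ha
  have hsub : (({a, b} : Finset Plane) : Set Plane) ∩ t ⊆ ({b} : Set Plane) ∩ t := by
    rintro y ⟨hy, hyt⟩
    simp at hy
    rcases hy with rfl | rfl
    · exact absurd hyt ha
    · exact ⟨rfl, hyt⟩
  have h' := convexHull_mono hsub h
  have h'' := convexHull_mono Set.inter_subset_left h'
  simp only [convexHull_singleton, Set.mem_singleton_iff, midpoint_eq_right_iff] at h''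
  subst h''
  have : ({a} : Set Plane) ∩ t = ∅ := by ext y; simp; rintro rfl; exact ha
  rw [this] at h'; simp at h'

/-- Every face with at most two vertices lies in a triangle, since the midpoint is covered. -/
lemma pair_subset_tri {T : SimplicialComplex ℝ Plane} (hT : IsTriangulation A T)
    (hdim : affineSpan ℝ (A : Set Plane) = ⊤) {u v : Plane} (huv : {u, v} ∈ T.faces) :
    ∃ t ∈ tris A T, {u, v} ⊆ t := by
  have huvA := face_subset hT huv
  have hm0 : midpoint ℝ u v ∈ convexHull ℝ (({u, v} : Finset Plane) : Set Plane) := by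
    rw [Finset.coe_pair, convexHull_pair]; exact midpoint_mem_segment u v
  have hm : midpoint ℝ u v ∈ convexHull ℝ (A : Set Plane) :=
    convexHull_mono (Finset.coe_subset.2 huvA) hm0
  have h3 := three_le_card hdim
  obtain ⟨t, ht, hmt⟩ := hull_subset_of_gen hdim (isClosed_union (tris A T))
    (fun x hx hg => tris_cov hT (B := A) subset_rfl (by omega) hx hg) hm
  refine ⟨t, ht, ?_⟩
  have hi := T.inter_subset_convexHull huv ((mem_tris hT).1 ht).1 ⟨hm0, hmt⟩
  intro y hy
  simp at hy
  rcases hy with rfl | rfl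
  · exact mem_of_midpoint hi
  · exact mem_of_midpoint (b := u) (by rw [midpoint_comm, Finset.pair_comm]; exact hi)

/-- A triangulation is pure: its faces are the nonempty subsets of its triangles. -/
lemma faces_iff {T : SimplicialComplex ℝ Plane} (hT : IsTriangulation A T)
    (hdim : affineSpan ℝ (A : Set Plane) = ⊤) (s : Finset Plane) :
    s ∈ T.faces ↔ s.Nonempty ∧ ∃ t ∈ tris A T, s ⊆ t := by
  constructor
  · intro hs
    have hne := T.nonempty_of_mem_faces hs
    refine ⟨hne, ?_⟩
    have h3 := hT.1 s hs
    have h0 := hne.card_pos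
    obtain h | h | h : s.card = 1 ∨ s.card = 2 ∨ s.card = 3 := by omega
    · obtain ⟨a, rfl⟩ := Finset.card_eq_one.1 h
      have := pair_subset_tri hT hdim (u := a) (v := a) (by simpa using hs)
      simpa using this
    · obtain ⟨a, b, -, rfl⟩ := Finset.card_eq_two.1 h
      exact pair_subset_tri hT hdim hs
    · exact ⟨s, (mem_tris hT).2 ⟨hs, h⟩, subset_rfl⟩
  · rintro ⟨hne, t, ht, hst⟩
    exact T.down_closed ((mem_tris hT).1 ht).1 hst hne

lemma tris_inj (hdim : affineSpan ℝ (A : Set Plane) = ⊤) {T₁ T₂ : SimplicialComplex ℝ Plane}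
    (h₁ : IsTriangulation A T₁) (h₂ : IsTriangulation A T₂) (h : tris A T₁ = tris A T₂) :
    T₁ = T₂ := by
  apply SimplicialComplex.ext
  ext s
  rw [faces_iff h₁ hdim, faces_iff h₂ hdim, h]

lemma tri_of_triangulation {T : SimplicialComplex ℝ Plane} (hT : IsTriangulation A T)
    (hdim : affineSpan ℝ (A : Set Plane) = ⊤) (hAB : A ⊆ B) : Tri B A (tris A T) := by
  have h3 := three_le_card hdim
  have hB2 : 2 ≤ B.card := by have := Finset.card_le_card hAB; omega
  refine ⟨fun s hs => face_subset hT ((mem_tris hT).1 hs).1, fun s hs => ((mem_tris hT).1 hs).2,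
    fun x hx hg => tris_cov hT hAB hB2 hx hg, ?_, ?_⟩
  · intro x hg s hs t ht hxs hxt
    by_contra hne
    have hs' := (mem_tris hT).1 hs
    have ht' := (mem_tris hT).1 ht
    have := T.inter_subset_convexHull hs'.1 ht'.1 ⟨hxs, hxt⟩
    rw [← Finset.coe_inter] at this
    refine not_gen_of_card_le_two hB2
      (Finset.inter_subset_left.trans ((face_subset hT hs'.1).trans hAB)) ?_ this hg
    by_contra hc
    have h1 : s ∩ t = s := Finset.eq_of_subset_of_card_le Finset.inter_subset_left (by omega)
    have h2 : s ∩ t = t := Finset.eq_of_subset_of_card_le Finset.inter_subset_right (by omega)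
    exact hne (h1.symm.trans h2)
  · intro a ha
    have hv : a ∈ T.vertices := by rw [hT.2.2]; exact ha
    obtain ⟨-, t, ht, hat⟩ := (faces_iff hT hdim {a}).1 hv
    exact ⟨t, ht, by simpa using hat⟩

lemma exists_triangulation (h : Tri B A F) (hB : InGeneralPosition B) (hAB : A ⊆ B)
    (hdim : affineSpan ℝ (A : Set Plane) = ⊤) :
    ∃ T, IsTriangulation A T ∧ tris A T = F := by
  let T : SimplicialComplex ℝ Plane :=
    { faces := {s | s.Nonempty ∧ ∃ t ∈ F, s ⊆ t}
      isRelLowerSet_faces := by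
        rintro s ⟨hs, t, ht, hst⟩
        exact ⟨hs, fun r hr hne => ⟨hne, t, ht, hr.trans hst⟩⟩
      indep := by
        rintro s ⟨hs, t, ht, hst⟩
        exact (indep_of_card hB ((h.sub t ht).trans hAB) (h.card t ht)).mono (by simpa using hst)
      inter_subset_convexHull := by
        rintro s r ⟨-, t, ht, hst⟩ ⟨-, q, hq, hrq⟩
        exact h.inter hB hAB ht hq hst hrq }
  have hT : IsTriangulation A T := by
    refine ⟨?_, ?_, ?_⟩
    · rintro s ⟨-, t, ht, hst⟩
      exact h.card t ht ▸ Finset.card_le_card hst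
    · apply Set.Subset.antisymm
      · intro x hx
        obtain ⟨s, ⟨-, t, ht, hst⟩, hxs⟩ := SimplicialComplex.mem_space_iff.1 hx
        exact convexHull_mono (by simpa using hst.trans (h.sub t ht)) hxs
      · intro x hx
        obtain ⟨s, hs, hxs⟩ := h.cover hdim hx
        refine SimplicialComplex.mem_space_iff.2 ⟨s, ⟨?_, s, hs, subset_rfl⟩, hxs⟩
        rw [← Finset.card_pos, h.card s hs]; norm_num
    · ext a
      constructor
      · rintro ⟨-, t, ht, hat⟩
        exact h.sub t ht (by simpa using hat)
      · intro ha
        obtain ⟨s, hs, has⟩ := h.vert a ha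
        exact ⟨by simp, s, hs, by simpa using has⟩
  refine ⟨T, hT, ?_⟩
  ext s
  rw [mem_tris hT]
  constructor
  · rintro ⟨⟨-, t, ht, hst⟩, h3⟩
    rwa [Finset.eq_of_subset_of_card_le hst (by rw [h3, h.card t ht])]
  · intro hs
    exact ⟨⟨by rw [← Finset.card_pos, h.card s hs]; norm_num, s, hs, subset_rfl⟩, h.card s hs⟩

end

/-! ### Local structure along an edge -/

section
variable {B A : Finset Plane} {F : Finset (Finset Plane)}

lemma midpoint_eq_comb (u v : Plane) : midpoint ℝ u v = (1 / 2 : ℝ) • u + (1 / 2 : ℝ) • v := by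
  rw [midpoint_eq_smul_add, smul_add]; norm_num

lemma D_midpoint (a b u v : Plane) : D a b (midpoint ℝ u v) = (D a b u + D a b v) / 2 := by
  rw [midpoint_eq_comb, D_comb _ _ _ _ (by norm_num)]; ring

/-- Two triangles of a triangulation on the same side of a common edge coincide. -/
lemma Tri.same_side (h : Tri B A F) (hB : InGeneralPosition B) (hAB : A ⊆ B) {u v w w' : Plane}
    (hw : {u, v, w} ∈ F) (hw' : {u, v, w'} ∈ F) (hD : 0 < D u v w) (hD' : 0 < D u v w') :
    w = w' := by
  by_contra hne
  set X := D v w' w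
  set Y := D w' u w
  set K := D u v w' with hK
  -- A point close to the midpoint of `u v` and on the side of `w` lies in both triangles.
  set ε : ℝ := K / (2 * K + 2 * |X| + 2 * |Y|) with hε
  have hpos : 0 < 2 * K + 2 * |X| + 2 * |Y| := by positivity
  have hε0 : 0 < ε := by positivity
  have hεm : ε * (2 * K + 2 * |X| + 2 * |Y|) = K := by rw [hε]; field_simp
  have hXe : ε * |X| ≥ - (ε * X) := by nlinarith [neg_abs_le X]
  have hYe : ε * |Y| ≥ - (ε * Y) := by nlinarith [neg_abs_le Y]
  have hX0 : 0 ≤ ε * |X| := by positivity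
  have hY0 : 0 ≤ ε * |Y| := by positivity
  have hε1 : ε ≤ 1 := by
    by_contra hc
    nlinarith [abs_nonneg X, abs_nonneg Y]
  set y : Plane := (1 - ε) • midpoint ℝ u v + ε • w with hy
  have hDy : ∀ a b, D a b y = (1 - ε) * ((D a b u + D a b v) / 2) + ε * D a b w := by
    intro a b; rw [hy, D_comb _ _ _ _ (by ring), D_midpoint]
  have hys : y ∈ convexHull ℝ (({u, v, w} : Finset Plane) : Set Plane) := by
    apply convex_convexHull ℝ _ ?_ ?_ (by linarith) hε0.le (by ring)
    · refine convexHull_mono (s := {u, v}) (by intro t; simp; tauto) ?_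
      rw [convexHull_pair]; exact midpoint_mem_segment u v
    · exact subset_convexHull ℝ _ (by simp)
  have hyt : y ∈ convexHull ℝ (({u, v, w'} : Finset Plane) : Set Plane) := by
    have hm := mem_tri (x := y) hD'
    simp only [Finset.coe_insert, Finset.coe_singleton]
    rw [hm, hDy, hDy, hDy]
    have e1 : D v w' u = K := D_rot _ _ _
    have e2 : D w' u v = K := by rw [D_rot, D_rot]
    rw [e1, e2]
    simp only [D_aba, D_abb]
    refine ⟨by nlinarith, ?_, ?_⟩
    · change 0 ≤ (1 - ε) * ((K + 0) / 2) + ε * X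
      nlinarith
    · change 0 ≤ (1 - ε) * ((0 + K) / 2) + ε * Y
      nlinarith
  have hi := h.inter hB hAB hw hw' subset_rfl subset_rfl ⟨hys, hyt⟩
  have h0 : D u v y = 0 := by
    refine D_zero_of_hull ?_ hi
    rintro t ⟨h1, h2⟩
    simp at h1 h2
    rcases h1 with rfl | rfl | rfl
    · simp
    · simp
    · rcases h2 with rfl | rfl | rfl
      · simp
      · simp
      · exact absurd rfl hne
  rw [hDy] at h0
  simp at h0
  rcases h0 with h0 | h0 <;> linarith

/-- An edge of a triangulation with a vertex strictly to its left has a triangle on its left. -/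
lemma Tri.extend (h : Tri B A F) (hB : InGeneralPosition B) (hAB : A ⊆ B)
    (hdim : affineSpan ℝ (A : Set Plane) = ⊤) {s : Finset Plane} {u v w : Plane} (hs : s ∈ F)
    (hu : u ∈ s) (hv : v ∈ s) (hw : w ∈ A) (hD : 0 < D u v w) :
    ∃ w', {u, v, w'} ∈ F ∧ 0 < D u v w' := by
  have huv : u ≠ v := (ne_of_D hD.ne').1
  set F' := F.filter (fun t => ∃ w' ∈ t, 0 < D u v w')
  set m := midpoint ℝ u v with hm
  have hmuv : m ∈ convexHull ℝ (({u, v} : Finset Plane) : Set Plane) := by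
    rw [Finset.coe_pair, convexHull_pair]; exact midpoint_mem_segment u v
  have hmA : m ∈ convexHull ℝ (A : Set Plane) := by
    refine convexHull_mono ?_ hmuv
    intro t ht
    simp at ht
    rcases ht with rfl | rfl
    · exact h.sub s hs hu
    · exact h.sub s hs hv
  have hDm : D u v m = 0 := by rw [D_midpoint]; simp
  have hK : ∀ y ∈ convexHull ℝ (A : Set Plane), 0 < D u v y →
      y ∈ {x : Plane | ∃ s ∈ F', x ∈ convexHull ℝ (s : Set Plane)} := by
    intro y hy hDy
    obtain ⟨t, ht, hyt⟩ := h.cover hdim hy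
    refine ⟨t, Finset.mem_filter.2 ⟨ht, ?_⟩, hyt⟩
    by_contra hc
    push Not at hc
    have := D_nonpos_of_hull (S := (t : Set Plane)) (fun x hx => hc x hx) hyt
    linarith
  have ht : Filter.Tendsto (fun ε : ℝ => (1 - ε) • m + ε • w) (nhdsWithin 0 (Set.Ioi 0))
      (nhds m) := by
    have : Continuous (fun ε : ℝ => (1 - ε) • m + ε • w) := by fun_prop
    simpa using (this.tendsto 0).mono_left nhdsWithin_le_nhds
  have hmK : m ∈ {x : Plane | ∃ s ∈ F', x ∈ convexHull ℝ (s : Set Plane)} := by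
    refine (isClosed_union F').mem_of_tendsto ht ?_
    filter_upwards [Ioo_mem_nhdsGT (show (0 : ℝ) < 1 by norm_num)] with ε hε
    apply hK
    · exact convex_convexHull ℝ _ hmA (subset_convexHull ℝ _ hw) (by linarith [hε.2]) hε.1.le
        (by ring)
    · rw [D_comb _ _ _ _ (by ring), hDm]
      have := mul_pos hε.1 hD
      linarith
  obtain ⟨t, ht, hmt⟩ := hmK
  obtain ⟨htF, w', hw't, hDw'⟩ := Finset.mem_filter.1 ht
  have hi := h.inter hB hAB hs htF (s' := {u, v}) (t' := t)
    (by intro x; simp; rintro (rfl | rfl) <;> assumption) subset_rfl ⟨hmuv, hmt⟩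
  have hut : u ∈ t := mem_of_midpoint hi
  have hvt : v ∈ t := mem_of_midpoint (b := u) (by rw [midpoint_comm, Finset.pair_comm]; exact hi)
  refine ⟨w', ?_, hDw'⟩
  have hn := ne_of_D hDw'.ne'
  have : ({u, v, w'} : Finset Plane) = t := by
    apply Finset.eq_of_subset_of_card_le
    · intro x; simp; rintro (rfl | rfl | rfl) <;> assumption
    · rw [h.card t htF, Finset.card_eq_three.2 ⟨u, v, w', hn.1, hn.2.2, hn.2.1, rfl⟩]
  rwa [this]

end

/-! ### The fan of triangles at `p` -/

/-- Standing hypotheses: `θ` is an angular coordinate around the boundary point `p`. -/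
structure Ctx (A : Finset Plane) (p : Plane) (θ : Plane → ℝ) : Prop where
  gp : InGeneralPosition A
  hp : p ∈ A
  dim : affineSpan ℝ (A : Set Plane) = ⊤
  dim' : affineSpan ℝ ((A.erase p : Finset Plane) : Set Plane) = ⊤
  hθ : ∀ a ∈ A.erase p, ∀ b ∈ A.erase p, (0 < D p a b ↔ θ a < θ b)

/-- The edges of the link of `p`, oriented counterclockwise around `p`. -/
noncomputable def Ed (A : Finset Plane) (p : Plane) (F : Finset (Finset Plane)) :
    Finset (Plane × Plane) :=
  ((A.erase p) ×ˢ (A.erase p)).filter (fun q => 0 < D p q.1 q.2 ∧ {p, q.1, q.2} ∈ F)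

section
variable {A : Finset Plane} {p : Plane} {θ : Plane → ℝ} {F : Finset (Finset Plane)}

lemma mem_Ed {a b : Plane} : (a, b) ∈ Ed A p F ↔
    a ∈ A.erase p ∧ b ∈ A.erase p ∧ 0 < D p a b ∧ {p, a, b} ∈ F := by
  simp only [Ed, Finset.mem_filter, Finset.mem_product, and_assoc]

lemma Ctx.trichotomy (c : Ctx A p θ) {a b : Plane} (ha : a ∈ A.erase p) (hb : b ∈ A.erase p)
    (hab : a ≠ b) : θ a < θ b ∨ θ b < θ a := by
  have ha' := Finset.mem_erase.1 ha
  have hb' := Finset.mem_erase.1 hb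
  rcases lt_or_gt_of_ne (D_ne c.gp c.hp ha'.2 hb'.2 ha'.1.symm hab hb'.1.symm) with h | h
  · right; rw [← c.hθ b hb a ha, D_swap']; linarith
  · left; rwa [← c.hθ a ha b hb]

lemma out_unique (c : Ctx A p θ) (h : Tri A A F) {a b b' : Plane} (h1 : (a, b) ∈ Ed A p F)
    (h2 : (a, b') ∈ Ed A p F) : b = b' := by
  rw [mem_Ed] at h1 h2
  exact h.same_side c.gp subset_rfl h1.2.2.2 h2.2.2.2 h1.2.2.1 h2.2.2.1

lemma rot3 (a b c : Plane) : ({a, b, c} : Finset Plane) = {c, a, b} := by ext; simp; tauto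

lemma in_unique (c : Ctx A p θ) (h : Tri A A F) {a a' b : Plane} (h1 : (a, b) ∈ Ed A p F)
    (h2 : (a', b) ∈ Ed A p F) : a = a' := by
  rw [mem_Ed] at h1 h2
  refine h.same_side c.gp subset_rfl (u := b) (v := p) (by rw [← rot3]; exact h1.2.2.2)
    (by rw [← rot3]; exact h2.2.2.2) ?_ ?_
  · rw [← D_rot]; exact h1.2.2.1
  · rw [← D_rot]; exact h2.2.2.1

lemma third_mem (h : Tri A A F) {a b : Plane} (hF : {p, a, b} ∈ F) (hD : D p a b ≠ 0) :
    a ∈ A.erase p ∧ b ∈ A.erase p := by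
  have hn := ne_of_D hD
  exact ⟨Finset.mem_erase.2 ⟨hn.1.symm, h.sub _ hF (by simp)⟩,
    Finset.mem_erase.2 ⟨hn.2.2.symm, h.sub _ hF (by simp)⟩⟩

/-- A vertex of the link of `p` that is not the last point has an outgoing link edge. -/
lemma out_exists (c : Ctx A p θ) (h : Tri A A F) {v d : Plane} {s : Finset Plane} (hs : s ∈ F)
    (hp : p ∈ s) (hvs : v ∈ s) (hv : v ∈ A.erase p) (hd : d ∈ A.erase p) (hlt : θ v < θ d) :
    ∃ e, (v, e) ∈ Ed A p F := by
  obtain ⟨e, he, hD⟩ := h.extend c.gp subset_rfl c.dim hs hp hvs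
    (Finset.mem_of_mem_erase hd) ((c.hθ v hv d hd).2 hlt)
  have := third_mem h he hD.ne'
  exact ⟨e, mem_Ed.2 ⟨hv, this.2, hD, he⟩⟩

/-- A vertex of the link of `p` that is not the first point has an incoming link edge. -/
lemma in_exists (c : Ctx A p θ) (h : Tri A A F) {v d : Plane} {s : Finset Plane} (hs : s ∈ F)
    (hp : p ∈ s) (hvs : v ∈ s) (hv : v ∈ A.erase p) (hd : d ∈ A.erase p) (hlt : θ d < θ v) :
    ∃ e, (e, v) ∈ Ed A p F := by
  obtain ⟨e, he, hD⟩ := h.extend c.gp subset_rfl c.dim hs hvs hp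
    (Finset.mem_of_mem_erase hd) (by rw [← D_rot]; exact (c.hθ d hd v hv).2 hlt)
  rw [← rot3 p e v] at he
  rw [← D_rot] at hD
  have := third_mem h he hD.ne'
  exact ⟨e, mem_Ed.2 ⟨this.1, hv, hD, he⟩⟩

/-- Every triangle at `p` comes from a link edge. -/
lemma exists_edge (c : Ctx A p θ) (h : Tri A A F) {s : Finset Plane} (hs : s ∈ F) (hp : p ∈ s) :
    ∃ a b, (a, b) ∈ Ed A p F ∧ s = {p, a, b} := by
  obtain ⟨x, y, z, rfl, hD⟩ := exists_orient c.gp (h.sub s hs) (h.card s hs)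
  have key : ∀ a b, ({x, y, z} : Finset Plane) = {p, a, b} → 0 < D p a b →
      ∃ a b, (a, b) ∈ Ed A p F ∧ ({x, y, z} : Finset Plane) = {p, a, b} := by
    intro a b he hD
    rw [he] at hs
    have := third_mem h hs hD.ne'
    exact ⟨a, b, mem_Ed.2 ⟨this.1, this.2, hD, hs⟩, he⟩
  simp at hp
  rcases hp with rfl | rfl | rfl
  · exact key y z rfl hD
  · exact key z x (by rw [rot3, rot3]) (by rwa [D_rot])
  · exact key x y (by rw [rot3]) (by rwa [D_rot, D_rot])

/-- The link of `p` is a path, so `p` has one neighbour more than link edges: each neighbour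
except the last point `z` is the source of exactly one link edge. -/
lemma degree_eq (c : Ctx A p θ) {T : SimplicialComplex ℝ Plane} (hT : IsTriangulation A T)
    {z : Plane} (hz : z ∈ A.erase p) (hmax : ∀ a ∈ A.erase p, θ a ≤ θ z) :
    degree T p = (Ed A p (tris A T)).card + 1 := by
  have h := tri_of_triangulation hT c.dim (B := A) subset_rfl
  set F := tris A T with hF
  set N := (A.erase p).filter (fun v => ∃ s ∈ F, p ∈ s ∧ v ∈ s) with hN
  have h1 : degree T p = N.card := by
    have hinj : Set.InjOn (fun v => ({p, v} : Finset Plane)) (N : Set Plane) := by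
      intro v hv w hw he
      have hv1 : v ≠ p := (Finset.mem_erase.1 (Finset.mem_filter.1 hv).1).1
      have : v ∈ ({p, w} : Finset Plane) := by
        have he' : ({p, v} : Finset Plane) = {p, w} := he
        rw [← he']; simp
      simp at this
      tauto
    have hset : {s : Finset Plane | s ∈ T.faces ∧ s.card = 2 ∧ p ∈ s} =
        ((N.image (fun v => ({p, v} : Finset Plane)) : Finset (Finset Plane)) :
          Set (Finset Plane)) := by
      ext s
      rw [Set.mem_ofPred_eq, Finset.mem_coe, Finset.mem_image]
      constructor
      · rintro ⟨hs, h2, hps⟩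
        obtain ⟨v, hv⟩ := Finset.card_eq_one.1
          (show (s.erase p).card = 1 by rw [Finset.card_erase_of_mem hps, h2])
        have hse : s = {p, v} := by rw [← Finset.insert_erase hps, hv]
        obtain ⟨-, t, ht, hst⟩ := (faces_iff hT c.dim s).1 hs
        have hvs : v ∈ s.erase p := by rw [hv]; simp
        have hvs' := Finset.mem_erase.1 hvs
        exact ⟨v, Finset.mem_filter.2 ⟨Finset.mem_erase.2 ⟨hvs'.1, h.sub t ht (hst hvs'.2)⟩,
          t, ht, hst hps, hst hvs'.2⟩, hse.symm⟩
      · rintro ⟨v, hv, rfl⟩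
        obtain ⟨hvA, t, ht, hpt, hvt⟩ := Finset.mem_filter.1 hv
        refine ⟨(faces_iff hT c.dim _).2 ⟨by simp, t, ht, ?_⟩,
          Finset.card_pair (Finset.mem_erase.1 hvA).1.symm, by simp⟩
        intro x hx
        simp at hx
        rcases hx with rfl | rfl <;> assumption
    unfold degree
    rw [hset, ← Finset.card_image_of_injOn hinj]
    exact Set.ncard_coe_finset _
  have h2 : (Ed A p F).image Prod.fst = N.erase z := by
    ext v
    simp only [Finset.mem_image, Prod.exists, exists_and_right, exists_eq_right, Finset.mem_erase]
    constructor
    · rintro ⟨b, hb⟩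
      have hb' := mem_Ed.1 hb
      refine ⟨?_, Finset.mem_filter.2 ⟨hb'.1, _, hb'.2.2.2, by simp, by simp⟩⟩
      rintro rfl
      have := (c.hθ _ hb'.1 _ hb'.2.1).1 hb'.2.2.1
      linarith [hmax b hb'.2.1]
    · rintro ⟨hne, hv⟩
      obtain ⟨hv, s, hs, hps, hvs⟩ := Finset.mem_filter.1 hv
      refine out_exists c h hs hps hvs hv hz ?_
      rcases c.trichotomy hv hz hne with h | h
      · exact h
      · linarith [hmax v hv]
  have h3 : z ∈ N := by
    obtain ⟨s, hs, hps⟩ := h.vert p c.hp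
    obtain ⟨a, b, hab, -⟩ := exists_edge c h hs hps
    obtain ⟨q, hq, hqmax⟩ := Finset.exists_max_image (Ed A p F) (fun q => θ q.2) ⟨_, hab⟩
    obtain ⟨a, b⟩ := q
    have hq' := mem_Ed.1 hq
    by_cases hbz : b = z
    · subst hbz
      exact Finset.mem_filter.2 ⟨hz, _, hq'.2.2.2, by simp, by simp⟩
    · exfalso
      obtain ⟨e, he⟩ := out_exists c h hq'.2.2.2 (by simp) (by simp) hq'.2.1 hz (by
        rcases c.trichotomy hq'.2.1 hz hbz with h | h
        · exact h
        · linarith [hmax b hq'.2.1])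
      have he' := mem_Ed.1 he
      have := (c.hθ _ he'.1 _ he'.2.1).1 he'.2.2.1
      have := hqmax _ he
      simp at this
      linarith
  rw [h1, ← Finset.card_erase_add_one h3, ← h2, Finset.card_image_of_injOn]
  rintro ⟨a, b⟩ hab ⟨a', b'⟩ hab' he
  simp at he
  subst he
  rw [out_unique c h hab hab']

end
/-! ### Flipping the quadrilateral formed by two consecutive triangles at `p` -/

section
variable {A : Finset Plane} {p : Plane} {θ : Plane → ℝ} {F : Finset (Finset Plane)}

lemma mem_tri' {a b c x : Plane} (h : 0 < D a b c) :
    x ∈ convexHull ℝ (({a, b, c} : Finset Plane) : Set Plane) ↔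
      0 ≤ D a b x ∧ 0 ≤ D b c x ∧ 0 ≤ D c a x := by
  rw [← mem_tri h]; simp

/-- A convex quadrilateral is the union of the two triangles cut out by a diagonal. -/
lemma quad {p a b c x : Plane} (h1 : 0 < D p a b) (h2 : 0 < D p b c) (h3 : 0 < D p a c)
    (h4 : 0 < D a b c) :
    (x ∈ convexHull ℝ (({p, a, b} : Finset Plane) : Set Plane) ∨
      x ∈ convexHull ℝ (({p, b, c} : Finset Plane) : Set Plane)) ↔
      0 ≤ D p a x ∧ 0 ≤ D a b x ∧ 0 ≤ D b c x ∧ 0 ≤ D c p x := by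
  have e1 : D b c a = D a b c := D_rot _ _ _
  have e2 : D b c p = D p b c := D_rot _ _ _
  have e3 : D c p a = D p a c := by rw [D_rot, D_rot]
  have e4 : D c p b = D p b c := by rw [D_rot, D_rot]
  have e5 : D a b p = D p a b := D_rot _ _ _
  constructor
  · have key : ∀ u v, 0 ≤ D u v p → 0 ≤ D u v a → 0 ≤ D u v b → 0 ≤ D u v c →
        (x ∈ convexHull ℝ (({p, a, b} : Finset Plane) : Set Plane) ∨
        x ∈ convexHull ℝ (({p, b, c} : Finset Plane) : Set Plane)) → 0 ≤ D u v x := by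
      rintro u v hp ha hb hc (hx | hx) <;>
      · refine D_nonneg_of_hull ?_ hx
        intro w hw
        simp at hw
        rcases hw with rfl | rfl | rfl <;> assumption
    intro hx
    refine ⟨key p a ?_ ?_ ?_ ?_ hx, key a b ?_ ?_ ?_ ?_ hx, key b c ?_ ?_ ?_ ?_ hx,
      key c p ?_ ?_ ?_ ?_ hx⟩ <;> simp [*, le_of_lt]
  · rintro ⟨g1, g2, g3, g4⟩
    rw [mem_tri' h1, mem_tri' h2]
    rcases le_total 0 (D p b x) with h | h
    · exact Or.inr ⟨h, g3, g4⟩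
    · exact Or.inl ⟨g1, g2, by rw [D_swap]; linarith⟩

/-- The order of the two link vertices of a triangle at `p` is determined by the orientation. -/
lemma pair_eq {p a b x y : Plane} (h1 : 0 < D p a b) (h2 : 0 < D p x y)
    (he : ({p, x, y} : Finset Plane) = {p, a, b}) : x = a ∧ y = b := by
  have hx : x ∈ ({p, a, b} : Finset Plane) := by rw [← he]; simp
  have hy : y ∈ ({p, a, b} : Finset Plane) := by rw [← he]; simp
  have n1 := ne_of_D h2.ne'
  simp at hx hy
  rcases hx with rfl | rfl | rfl
  · exact absurd rfl n1.1
  · rcases hy with rfl | rfl | rfl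
    · exact absurd rfl n1.2.2
    · exact absurd rfl n1.2.1
    · exact ⟨rfl, rfl⟩
  · rcases hy with rfl | rfl | rfl
    · exact absurd rfl n1.2.2
    · rw [D_swap'] at h2; linarith
    · exact absurd rfl n1.2.1

lemma card_tri {a b c : Plane} (h : 0 < D a b c) : ({a, b, c} : Finset Plane).card = 3 :=
  have hn := ne_of_D h.ne'
  Finset.card_eq_three.2 ⟨a, b, c, hn.1, hn.2.2, hn.2.1, rfl⟩

/-- The flip of the diagonal `p b` of the quadrilateral `p a b c`. -/
noncomputable def flip (F : Finset (Finset Plane)) (p a b c : Plane) : Finset (Finset Plane) :=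
  {{p, a, c}, {a, b, c}} ∪ ((F.erase {p, a, b}).erase {p, b, c})

lemma mem_flip {p a b c : Plane} {s : Finset Plane} : s ∈ flip F p a b c ↔
    (s = {p, a, c} ∨ s = {a, b, c}) ∨ (s ∈ F ∧ s ≠ {p, a, b} ∧ s ≠ {p, b, c}) := by
  simp only [flip, Finset.mem_union, Finset.mem_insert, Finset.mem_singleton, Finset.mem_erase]
  tauto

lemma Ctx.lt_of_mem (c : Ctx A p θ) {a b : Plane} (h : (a, b) ∈ Ed A p F) : θ a < θ b := by
  have h := mem_Ed.1 h
  exact (c.hθ _ h.1 _ h.2.1).1 h.2.2.1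

lemma flip_tri (c : Ctx A p θ) (h : Tri A A F) {a b d : Plane} (h1 : (a, b) ∈ Ed A p F)
    (h2 : (b, d) ∈ Ed A p F) (hD : 0 < D a b d) : Tri A A (flip F p a b d) := by
  have g1 := mem_Ed.1 h1
  have g2 := mem_Ed.1 h2
  have h3 : 0 < D p a d := (c.hθ a g1.1 d g2.2.1).2 ((c.lt_of_mem h1).trans (c.lt_of_mem h2))
  have hpA := c.hp
  have haA := Finset.mem_of_mem_erase g1.1
  have hbA := Finset.mem_of_mem_erase g1.2.1
  have hdA := Finset.mem_of_mem_erase g2.2.1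
  have e3 : D a d p = D p a d := D_rot _ _ _
  have e5 : D a b p = D p a b := D_rot _ _ _
  have e2 : D b d p = D p b d := D_rot _ _ _
  have hq : ∀ x, (x ∈ convexHull ℝ (({p, a, d} : Finset Plane) : Set Plane) ∨
      x ∈ convexHull ℝ (({a, b, d} : Finset Plane) : Set Plane)) ↔
      (x ∈ convexHull ℝ (({p, a, b} : Finset Plane) : Set Plane) ∨
      x ∈ convexHull ℝ (({p, b, d} : Finset Plane) : Set Plane)) := by
    intro x
    rw [quad g1.2.2.1 g2.2.2.1 h3 hD, rot3 p a d, rot3 d p a, or_comm,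
      quad hD (by rw [e3]; exact h3) (by rw [e5]; exact g1.2.2.1) (by rw [e2]; exact g2.2.2.1)]
    tauto
  refine ⟨?_, ?_, ?_, ?_, ?_⟩
  · intro s hs
    rcases mem_flip.1 hs with (rfl | rfl) | hs
    · intro x hx
      simp at hx
      rcases hx with rfl | rfl | rfl <;> assumption
    · intro x hx
      simp at hx
      rcases hx with rfl | rfl | rfl <;> assumption
    · exact h.sub s hs.1
  · intro s hs
    rcases mem_flip.1 hs with (rfl | rfl) | hs
    · exact card_tri h3
    · exact card_tri hD
    · exact h.card s hs.1
  · intro x hx hg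
    have hn : (x ∈ convexHull ℝ (({p, a, b} : Finset Plane) : Set Plane) ∨
      x ∈ convexHull ℝ (({p, b, d} : Finset Plane) : Set Plane)) →
        ∃ s ∈ flip F p a b d, x ∈ convexHull ℝ (s : Set Plane) := by
      intro hx
      rcases (hq x).2 hx with hx | hx
      · exact ⟨_, mem_flip.2 (Or.inl (Or.inl rfl)), hx⟩
      · exact ⟨_, mem_flip.2 (Or.inl (Or.inr rfl)), hx⟩
    obtain ⟨s, hs, hxs⟩ := h.cov x hx hg
    by_cases hs1 : s = {p, a, b}
    · subst hs1; exact hn (Or.inl hxs)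
    by_cases hs2 : s = {p, b, d}
    · subst hs2; exact hn (Or.inr hxs)
    exact ⟨s, mem_flip.2 (Or.inr ⟨hs, hs1, hs2⟩), hxs⟩
  · intro x hg s hs t ht hxs hxt
    have hno : ∀ s ∈ F, s ≠ {p, a, b} → s ≠ {p, b, d} → x ∈ convexHull ℝ (s : Set Plane) →
        ¬ (x ∈ convexHull ℝ (({p, a, d} : Finset Plane) : Set Plane) ∨
        x ∈ convexHull ℝ (({a, b, d} : Finset Plane) : Set Plane)) := by
      intro s hs hs1 hs2 hxs hx
      rcases (hq x).1 hx with hx | hx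
      · exact hs1 (h.uniq x hg s hs _ g1.2.2.2 hxs hx)
      · exact hs2 (h.uniq x hg s hs _ g2.2.2.2 hxs hx)
    have hno2 : x ∈ convexHull ℝ (({p, a, d} : Finset Plane) : Set Plane) →
        x ∈ convexHull ℝ (({a, b, d} : Finset Plane) : Set Plane) → False := by
      intro k1 k2
      rw [mem_tri' h3] at k1
      rw [mem_tri' hD] at k2
      have := k2.2.2
      rw [D_swap] at this
      exact hg a haA d hdA (ne_of_D hD.ne').2.2 (by linarith [k1.2.1])
    rcases mem_flip.1 hs with (rfl | rfl) | hs <;> rcases mem_flip.1 ht with (rfl | rfl) | ht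
    · rfl
    · exact (hno2 hxs hxt).elim
    · exact (hno t ht.1 ht.2.1 ht.2.2 hxt (Or.inl hxs)).elim
    · exact (hno2 hxt hxs).elim
    · rfl
    · exact (hno t ht.1 ht.2.1 ht.2.2 hxt (Or.inr hxs)).elim
    · exact (hno s hs.1 hs.2.1 hs.2.2 hxs (Or.inl hxt)).elim
    · exact (hno s hs.1 hs.2.1 hs.2.2 hxs (Or.inr hxt)).elim
    · exact h.uniq x hg s hs.1 t ht.1 hxs hxt
  · intro v hv
    have hn : v = p ∨ v = a ∨ v = b ∨ v = d → ∃ s ∈ flip F p a b d, v ∈ s := by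
      rintro (rfl | rfl | rfl | rfl)
      · exact ⟨_, mem_flip.2 (Or.inl (Or.inl rfl)), by simp⟩
      · exact ⟨_, mem_flip.2 (Or.inl (Or.inl rfl)), by simp⟩
      · exact ⟨_, mem_flip.2 (Or.inl (Or.inr rfl)), by simp⟩
      · exact ⟨_, mem_flip.2 (Or.inl (Or.inl rfl)), by simp⟩
    obtain ⟨s, hs, hvs⟩ := h.vert v hv
    by_cases hs1 : s = {p, a, b}
    · subst hs1; simp at hvs; apply hn; tauto
    by_cases hs2 : s = {p, b, d}
    · subst hs2; simp at hvs; apply hn; tauto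
    exact ⟨s, mem_flip.2 (Or.inr ⟨hs, hs1, hs2⟩), hvs⟩

/-- The flip replaces the link edges `a b` and `b d` by `a d`. -/
lemma flip_Ed (c : Ctx A p θ) {a b d : Plane} (h1 : (a, b) ∈ Ed A p F)
    (h2 : (b, d) ∈ Ed A p F) :
    Ed A p (flip F p a b d) = insert (a, d) (((Ed A p F).erase (a, b)).erase (b, d)) := by
  have g1 := mem_Ed.1 h1
  have g2 := mem_Ed.1 h2
  have h3 : 0 < D p a d := (c.hθ a g1.1 d g2.2.1).2 ((c.lt_of_mem h1).trans (c.lt_of_mem h2))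
  have hpn : p ∉ ({a, b, d} : Finset Plane) := by
    have n1 := Finset.mem_erase.1 g1.1
    have n2 := Finset.mem_erase.1 g1.2.1
    have n3 := Finset.mem_erase.1 g2.2.1
    simp [n1.1.symm, n2.1.symm, n3.1.symm]
  ext ⟨x, y⟩
  rw [mem_Ed, mem_flip, Finset.mem_insert, Finset.mem_erase (a := (x, y)),
    Finset.mem_erase (a := (x, y)), mem_Ed]
  simp only [ne_eq, Prod.mk.injEq]
  constructor
  · rintro ⟨hx, hy, hD, (he | he) | he⟩
    · exact Or.inl (pair_eq h3 hD he)
    · exact absurd (by rw [← he]; simp) hpn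
    · refine Or.inr ⟨?_, ?_, hx, hy, hD, he.1⟩
      · rintro ⟨rfl, rfl⟩; exact he.2.2 rfl
      · rintro ⟨rfl, rfl⟩; exact he.2.1 rfl
  · rintro (⟨rfl, rfl⟩ | ⟨n2, n1, hx, hy, hD, he⟩)
    · exact ⟨g1.1, g2.2.1, h3, Or.inl (Or.inl rfl)⟩
    · refine ⟨hx, hy, hD, Or.inr ⟨he, fun he => n1 (pair_eq g1.2.2.1 hD he),
        fun he => n2 (pair_eq g2.2.2.1 hD he)⟩⟩

lemma flip_not_mem (c : Ctx A p θ) (h : Tri A A F) {a b d : Plane} (h1 : (a, b) ∈ Ed A p F)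
    (h2 : (b, d) ∈ Ed A p F) : (a, d) ∉ Ed A p F := by
  intro h3
  obtain rfl := out_unique c h h1 h3
  exact lt_irrefl _ (c.lt_of_mem h2)

end
/-! ### Decoding links from binary trees -/

/-- The edge paths obtained from `a b` by walking through the triangles of `G`: a leaf keeps the
edge, a node replaces `a b` by the other two sides of the triangle of `G` attached to it. -/
def Exp (G : Finset (Finset Plane)) :
    BinaryTree Unit → Plane → Plane → Multiset (Plane × Plane) → Prop
  | .nil, a, b, S => S = {(a, b)}
  | .node _ l r, a, b, S => ∃ c S1 S2, ({a, c, b} : Finset Plane) ∈ G ∧ 0 < D a c b ∧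
      Exp G l a c S1 ∧ Exp G r c b S2 ∧ S = S1 + S2

/-- The edge paths obtained by subdividing the path from `a` to `z` along `E`; the tree splits off
its edges one at a time, and the subtrees describe their subdivisions. The tree of the last edge
`a z` is not wrapped in a further node, so that nodes are one fewer than edges. -/
def Dec (G : Finset (Finset Plane)) (E : Plane → Plane → Prop) (z : Plane) :
    BinaryTree Unit → Plane → Multiset (Plane × Plane) → Prop
  | .nil, a, S => E a z ∧ Exp G .nil a z S
  | .node u l r, a, S => (E a z ∧ Exp G (.node u l r) a z S) ∨
      ∃ b S1 S2, b ≠ z ∧ E a b ∧ Exp G l a b S1 ∧ Dec G E z r b S2 ∧ S = S1 + S2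

section
variable {G : Finset (Finset Plane)} {E : Plane → Plane → Prop} {z : Plane}

lemma Exp.card {t : BinaryTree Unit} : ∀ {a b : Plane} {S : Multiset (Plane × Plane)},
    Exp G t a b S → S.card = t.numNodes + 1 := by
  induction t with
  | nil => rintro a b S h; simp only [Exp] at h; subst h; rfl
  | node u l r ihl ihr =>
    rintro a b S ⟨c, S1, S2, -, -, h1, h2, rfl⟩
    rw [Multiset.card_add, ihl h1, ihr h2, BinaryTree.numNodes]; ring

lemma Dec.card {t : BinaryTree Unit} : ∀ {a : Plane} {S : Multiset (Plane × Plane)},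
    Dec G E z t a S → S.card = t.numNodes + 1 := by
  induction t with
  | nil => rintro a S ⟨-, h⟩; exact h.card
  | node u l r ihl ihr =>
    rintro a S (⟨-, h⟩ | ⟨b, S1, S2, -, -, h1, h2, rfl⟩)
    · exact h.card
    · rw [Multiset.card_add, h1.card, ihr h2, BinaryTree.numNodes]; ring

lemma Exp.unique (hG : ∀ a b c c' : Plane, {a, c, b} ∈ G → {a, c', b} ∈ G → 0 < D a c b →
    0 < D a c' b → c = c') {t : BinaryTree Unit} : ∀ {a b : Plane} {S S' : Multiset (Plane × Plane)},
    Exp G t a b S → Exp G t a b S' → S = S' := by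
  induction t with
  | nil => intro a b S S' h h'; simp only [Exp] at h h'; rw [h, h']
  | node u l r ihl ihr =>
    rintro a b S S' ⟨c, S1, S2, hc, hD, h1, h2, rfl⟩ ⟨c', S1', S2', hc', hD', h1', h2', rfl⟩
    obtain rfl := hG a b c c' hc hc' hD hD'
    rw [ihl h1 h1', ihr h2 h2']

lemma Dec.unique (hG : ∀ a b c c' : Plane, {a, c, b} ∈ G → {a, c', b} ∈ G → 0 < D a c b →
    0 < D a c' b → c = c') (hE : ∀ a b b', E a b → E a b' → b = b') {t : BinaryTree Unit} :
    ∀ {a : Plane} {S S' : Multiset (Plane × Plane)},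
    Dec G E z t a S → Dec G E z t a S' → S = S' := by
  induction t with
  | nil => rintro a S S' ⟨-, h⟩ ⟨-, h'⟩; exact h.unique hG h'
  | node u l r ihl ihr =>
    rintro a S S' (⟨e, h⟩ | ⟨b, S1, S2, hb, e, h1, h2, rfl⟩)
      (⟨e', h'⟩ | ⟨b', S1', S2', hb', e', h1', h2', rfl⟩)
    · exact h.unique hG h'
    · exact absurd (hE _ _ _ e' e) hb'
    · exact absurd (hE _ _ _ e e') hb
    · obtain rfl := hE _ _ _ e e'
      rw [h1.unique hG h1', ihr h2 h2']

lemma cons_eq_add {α : Type*} {q : α} {S S1 S2 : Multiset α} (h : q ::ₘ S = S1 + S2) :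
    (∃ R, S1 = q ::ₘ R ∧ S = R + S2) ∨ (∃ R, S2 = q ::ₘ R ∧ S = S1 + R) := by
  have hq : q ∈ S1 + S2 := by rw [← h]; exact Multiset.mem_cons_self _ _
  rcases Multiset.mem_add.1 hq with hq | hq
  · obtain ⟨R, rfl⟩ := Multiset.exists_cons_of_mem hq
    refine Or.inl ⟨R, rfl, ?_⟩
    rwa [Multiset.cons_add, Multiset.cons_inj_right] at h
  · obtain ⟨R, rfl⟩ := Multiset.exists_cons_of_mem hq
    refine Or.inr ⟨R, rfl, ?_⟩
    rwa [Multiset.add_cons, Multiset.cons_inj_right] at h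

/-- Subdividing one edge of a decoded path by its triangle in `G` gives a decoded path. -/
lemma Exp.insert {x c y : Plane} (hc : {x, c, y} ∈ G) (hD : 0 < D x c y) {t : BinaryTree Unit} :
    ∀ {a b : Plane} {S : Multiset (Plane × Plane)}, Exp G t a b ((x, y) ::ₘ S) →
    ∃ t', Exp G t' a b ((x, c) ::ₘ (c, y) ::ₘ S) := by
  induction t with
  | nil =>
    intro a b S h
    rw [Exp, ← Multiset.cons_zero, ← Multiset.singleton_add, ← Multiset.singleton_add] at h
    have hS : S = 0 := by
      have := congrArg Multiset.card h
      simpa using this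
    subst hS
    simp at h
    obtain ⟨rfl, rfl⟩ := h
    exact ⟨.node () .nil .nil, c, {(x, c)}, {(c, y)}, hc, hD, rfl, rfl, rfl⟩
  | node u l r ihl ihr =>
    rintro a b S ⟨d, S1, S2, hd, hDd, h1, h2, h⟩
    rcases cons_eq_add h with ⟨R, rfl, rfl⟩ | ⟨R, rfl, rfl⟩
    · obtain ⟨l', hl'⟩ := ihl h1
      exact ⟨.node () l' r, d, _, S2, hd, hDd, hl', h2, by simp⟩
    · obtain ⟨r', hr'⟩ := ihr h2
      exact ⟨.node () l r', d, S1, _, hd, hDd, h1, hr', by simp⟩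

lemma Dec.of_exp {t : BinaryTree Unit} {a : Plane} {S : Multiset (Plane × Plane)} (hE : E a z)
    (h : Exp G t a z S) : Dec G E z t a S := by
  cases t with
  | nil => exact ⟨hE, h⟩
  | node u l r => exact Or.inl ⟨hE, h⟩

lemma Dec.insert {x c y : Plane} (hc : {x, c, y} ∈ G) (hD : 0 < D x c y) {t : BinaryTree Unit} :
    ∀ {a : Plane} {S : Multiset (Plane × Plane)}, Dec G E z t a ((x, y) ::ₘ S) →
    ∃ t', Dec G E z t' a ((x, c) ::ₘ (c, y) ::ₘ S) := by
  induction t with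
  | nil =>
    rintro a S ⟨e, h⟩
    obtain ⟨t', ht'⟩ := h.insert hc hD
    exact ⟨t', Dec.of_exp e ht'⟩
  | node u l r ihl ihr =>
    rintro a S (⟨e, h⟩ | ⟨b, S1, S2, hb, e, h1, h2, h⟩)
    · obtain ⟨t', ht'⟩ := h.insert hc hD
      exact ⟨t', Dec.of_exp e ht'⟩
    · rcases cons_eq_add h with ⟨R, rfl, rfl⟩ | ⟨R, rfl, rfl⟩
      · obtain ⟨l', hl'⟩ := h1.insert hc hD
        exact ⟨.node () l' r, Or.inr ⟨b, _, S2, hb, e, hl', h2, by simp⟩⟩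
      · obtain ⟨r', hr'⟩ := ihr h2
        exact ⟨.node () l r', Or.inr ⟨b, S1, _, hb, e, h1, hr', by simp⟩⟩

/-- A `θ`-monotone path of edges of `E` from `a` to `z` is decoded from a tree, all of whose left
subtrees are leaves. -/
lemma exists_dec (θ : Plane → ℝ) : ∀ (n : ℕ) (S : Finset (Plane × Plane)) (a : Plane),
    S.card = n → S.Nonempty → (∀ q ∈ S, θ q.1 < θ q.2 ∧ E q.1 q.2) →
    (∀ x y, (x, y) ∈ S → x = a ∨ ∃ w, (w, x) ∈ S) →
    (∀ x y, (x, y) ∈ S → y = z ∨ ∃ w, (y, w) ∈ S) →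
    (∀ x y y', (x, y) ∈ S → (x, y') ∈ S → y = y') →
    (∀ x x' y, (x, y) ∈ S → (x', y) ∈ S → x = x') →
    (∀ x y, (x, y) ∈ S → y ≠ a) → (∀ x y, (x, y) ∈ S → x ≠ z) →
    ∃ t, Dec G E z t a S.val := by
  intro n
  induction n with
  | zero =>
    intro S a hn hne
    exact absurd (Finset.card_eq_zero.1 hn) hne.ne_empty
  | succ n ih =>
    intro S a hn hne hE hin hout hou hiu ha hz
    obtain ⟨⟨a', b⟩, hab, hmin⟩ := Finset.exists_min_image S (fun q => θ q.1) hne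
    obtain rfl : a' = a := by
      rcases hin _ _ hab with h | ⟨w, hw⟩
      · exact h
      · have h1 := hmin _ hw
        have h2 := (hE _ hw).1
        simp at h1 h2
        linarith
    have hval : S.val = {(a', b)} + (S.erase (a', b)).val := by
      rw [Finset.erase_val, Multiset.singleton_add, Multiset.cons_erase hab]
    have hsub : ∀ q, q ∈ S.erase (a', b) → q ∈ S := fun q hq => Finset.mem_of_mem_erase hq
    have hin' : ∀ x y, (x, y) ∈ S.erase (a', b) → x = b ∨ ∃ w, (w, x) ∈ S.erase (a', b) := by
      intro x y hxy
      rcases hin _ _ (hsub _ hxy) with rfl | ⟨w, hw⟩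
      · exact absurd (by rw [hou _ _ _ (hsub _ hxy) hab]) (Finset.mem_erase.1 hxy).1
      · by_cases hwx : (w, x) = (a', b)
        · exact Or.inl (Prod.ext_iff.1 hwx).2
        · exact Or.inr ⟨w, Finset.mem_erase.2 ⟨hwx, hw⟩⟩
    by_cases hbz : b = z
    · subst hbz
      have hemp : S.erase (a', b) = ∅ := by
        by_contra hc
        obtain ⟨⟨x, y⟩, hxy, hmin'⟩ := Finset.exists_min_image (S.erase (a', b)) (fun q => θ q.1)
          (Finset.nonempty_iff_ne_empty.2 hc)
        rcases hin' _ _ hxy with rfl | ⟨w, hw⟩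
        · exact hz _ _ (hsub _ hxy) rfl
        · have h1 := hmin' _ hw
          have h2 := (hE _ (hsub _ hw)).1
          simp at h1 h2
          linarith
      rw [hemp] at hval
      exact ⟨.nil, (hE _ hab).2, by simpa [Exp] using hval⟩
    · obtain ⟨y, hy⟩ := (hout _ _ hab).resolve_left hbz
      have hy' : (b, y) ∈ S.erase (a', b) := by
        refine Finset.mem_erase.2 ⟨?_, hy⟩
        intro he
        exact ha _ _ hab (Prod.ext_iff.1 he).1
      obtain ⟨t, ht⟩ := ih (S.erase (a', b)) b (by rw [Finset.card_erase_of_mem hab, hn]; rfl)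
        ⟨_, hy'⟩ (fun q hq => hE q (hsub q hq)) hin'
        (by
          intro x y hxy
          rcases hout _ _ (hsub _ hxy) with rfl | ⟨w, hw⟩
          · exact Or.inl rfl
          · refine Or.inr ⟨w, Finset.mem_erase.2 ⟨?_, hw⟩⟩
            intro he
            exact ha _ _ (hsub _ hxy) (Prod.ext_iff.1 he).1)
        (fun x y y' h h' => hou x y y' (hsub _ h) (hsub _ h'))
        (fun x x' y h h' => hiu x x' y (hsub _ h) (hsub _ h'))
        (by
          rintro x y hxy rfl
          exact (Finset.mem_erase.1 hxy).1 (by rw [hiu _ _ _ (hsub _ hxy) hab]))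
        (fun x y h => hz x y (hsub _ h))
      exact ⟨.node () .nil t, Or.inr ⟨b, {(a', b)}, _, hbz, (hE _ hab).2, rfl, ht, hval⟩⟩

end
/-! ### Links without flippable edges -/

/-- `a b` is an edge of the convex hull of `A \ {p}` that is visible from `p`. -/
def HE (A : Finset Plane) (p a b : Plane) : Prop :=
  a ∈ A.erase p ∧ b ∈ A.erase p ∧ 0 < D p a b ∧ ∀ v ∈ A.erase p, v ≠ a → v ≠ b → D a b v < 0

section
variable {A : Finset Plane} {p : Plane} {θ : Plane → ℝ} {F : Finset (Finset Plane)}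

lemma HE.unique {a b b' : Plane} (h : HE A p a b) (h' : HE A p a b') : b = b' := by
  by_contra hne
  have h1 := (ne_of_D h.2.2.1.ne').2.1
  have h2 := (ne_of_D h'.2.2.1.ne').2.1
  have h3 := h.2.2.2 b' h'.2.1 h2.symm (Ne.symm hne)
  have h4 := h'.2.2.2 b h.2.1 h1.symm hne
  rw [D_swap'] at h4
  linarith

/-- A point whose angle lies between those of `a` and `b` is beyond the link edge `a b`, as the
triangle `p a b` contains no further point of `A`. -/
lemma between (c : Ctx A p θ) (h : Tri A A F) {a b v : Plane} (hab : (a, b) ∈ Ed A p F)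
    (hv : v ∈ A.erase p) (h1 : θ a < θ v) (h2 : θ v < θ b) : D a b v < 0 := by
  have g := mem_Ed.1 hab
  by_contra hc
  have hm : v ∈ convexHull ℝ (({p, a, b} : Finset Plane) : Set Plane) := by
    rw [mem_tri' g.2.2.1]
    refine ⟨((c.hθ a g.1 v hv).2 h1).le, not_lt.1 hc, ?_⟩
    rw [show D b p v = D p v b by unfold D; ring]
    exact ((c.hθ v hv b g.2.1).2 h2).le
  have := h.empty c.gp subset_rfl g.2.2.2 (Finset.mem_of_mem_erase hv) hm
  simp at this
  rcases this with rfl | rfl | rfl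
  · exact (Finset.mem_erase.1 hv).1 rfl
  · exact lt_irrefl _ h1
  · exact lt_irrefl _ h2

/-- If the link of `p` turns away from `p` at each vertex then all later points lie beyond each of
its edges; by induction, starting from the last edge. -/
lemma forward (c : Ctx A p θ) (h : Tri A A F)
    (hterm : ∀ a b d, (a, b) ∈ Ed A p F → (b, d) ∈ Ed A p F → D a b d < 0) :
    ∀ a b v, (a, b) ∈ Ed A p F → v ∈ A.erase p → θ b < θ v → D a b v < 0 := by
  intro a₀ b₀ v₀ hab₀ hv₀ hlt₀
  by_contra hc
  obtain ⟨⟨a, b⟩, hq, hmax⟩ := Finset.exists_max_image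
    ((Ed A p F).filter (fun q => ∃ v ∈ A.erase p, θ q.2 < θ v ∧ ¬ D q.1 q.2 v < 0))
    (fun q => θ q.2) ⟨(a₀, b₀), Finset.mem_filter.2 ⟨hab₀, v₀, hv₀, hlt₀, hc⟩⟩
  obtain ⟨hab, v, hv, hlt, hD⟩ := Finset.mem_filter.1 hq
  have g := mem_Ed.1 hab
  obtain ⟨d, hbd⟩ := out_exists c h g.2.2.2 (by simp) (by simp) g.2.1 hv hlt
  have g' := mem_Ed.1 hbd
  have ht := hterm a b d hab hbd
  apply hD
  by_cases hdv : d = v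
  · rwa [hdv] at ht
  have hn : D b d v < 0 := by
    rcases c.trichotomy g'.2.1 hv hdv with h1 | h1
    · by_contra hc'
      have := hmax (b, d) (Finset.mem_filter.2 ⟨hbd, v, hv, h1, hc'⟩)
      have h2 := c.lt_of_mem hbd
      simp at this
      linarith
    · exact between c h hbd hv hlt h1
  have hp := D_pluecker b p a d v
  have e1 : D b p a = D p a b := by rw [D_rot, D_rot]
  rw [e1, D_swap p b d, D_swap a b v, D_swap p b v, D_swap a b d] at hp
  have k1 := (c.hθ b g.2.1 v hv).2 hlt
  have k2 := mul_pos g.2.2.1 (neg_pos.2 hn)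
  have k3 := mul_pos k1 (neg_pos.2 ht)
  by_contra hge
  have k4 := mul_nonneg g'.2.2.1.le (not_lt.1 hge)
  dsimp only at *
  linarith

/-- The mirror image of `forward`; the induction starts from the first edge. -/
lemma backward (c : Ctx A p θ) (h : Tri A A F)
    (hterm : ∀ a b d, (a, b) ∈ Ed A p F → (b, d) ∈ Ed A p F → D a b d < 0) :
    ∀ a b v, (a, b) ∈ Ed A p F → v ∈ A.erase p → θ v < θ a → D a b v < 0 := by
  intro a₀ b₀ v₀ hab₀ hv₀ hlt₀
  by_contra hc
  obtain ⟨⟨a, b⟩, hq, hmin⟩ := Finset.exists_min_image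
    ((Ed A p F).filter (fun q => ∃ v ∈ A.erase p, θ v < θ q.1 ∧ ¬ D q.1 q.2 v < 0))
    (fun q => θ q.1) ⟨(a₀, b₀), Finset.mem_filter.2 ⟨hab₀, v₀, hv₀, hlt₀, hc⟩⟩
  obtain ⟨hab, v, hv, hlt, hD⟩ := Finset.mem_filter.1 hq
  have g := mem_Ed.1 hab
  obtain ⟨e, hea⟩ := in_exists c h g.2.2.2 (by simp) (by simp) g.1 hv hlt
  have g' := mem_Ed.1 hea
  have ht := hterm e a b hea hab
  apply hD
  by_cases hev : e = v
  · rw [hev, ← D_rot] at ht; exact ht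
  have hn : D e a v < 0 := by
    rcases c.trichotomy g'.1 hv hev with h1 | h1
    · exact between c h hea hv h1 hlt
    · by_contra hc'
      have := hmin (e, a) (Finset.mem_filter.2 ⟨hea, v, hv, h1, hc'⟩)
      have h2 := c.lt_of_mem hea
      simp at this
      linarith
  have hp := D_pluecker a p b e v
  have e1 : D a p e = D p e a := by rw [D_rot, D_rot]
  have e2 : D a p v = D p v a := by rw [D_rot, D_rot]
  have e3 : D a b e = D e a b := by rw [D_rot]
  rw [e1, e2, e3, D_swap p a b, D_swap e a v] at hp
  have k1 := (c.hθ v hv a g.1).2 hlt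
  have k2 := mul_pos g.2.2.1 (neg_pos.2 hn)
  have k3 := mul_pos k1 (neg_pos.2 ht)
  by_contra hge
  have k4 := mul_nonneg g'.2.2.1.le (not_lt.1 hge)
  dsimp only at *
  linarith

lemma he_of_mem (c : Ctx A p θ) (h : Tri A A F)
    (hterm : ∀ a b d, (a, b) ∈ Ed A p F → (b, d) ∈ Ed A p F → D a b d < 0) {a b : Plane}
    (hab : (a, b) ∈ Ed A p F) : HE A p a b := by
  have g := mem_Ed.1 hab
  refine ⟨g.1, g.2.1, g.2.2.1, fun v hv hva hvb => ?_⟩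
  rcases c.trichotomy hv g.1 hva with h1 | h1
  · exact backward c h hterm a b v hab hv h1
  · rcases c.trichotomy hv g.2.1 hvb with h2 | h2
    · exact between c h hab hv h1 h2
    · exact forward c h hterm a b v hab hv h2

/-- Removing the triangles at `p` leaves a triangulation of `A \ {p}` when the link of `p` consists
of hull edges of `A \ {p}`. -/
lemma tri_erase (c : Ctx A p θ) (h : Tri A A F)
    (hE : ∀ a b, (a, b) ∈ Ed A p F → HE A p a b) :
    Tri A (A.erase p) (F.filter (fun s => p ∉ s)) := by
  have hcov : ∀ x ∈ convexHull ℝ ((A.erase p : Finset Plane) : Set Plane), Gen A x →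
      ∃ s ∈ F.filter (fun s => p ∉ s), x ∈ convexHull ℝ (s : Set Plane) := by
    intro x hx hg
    obtain ⟨s, hs, hxs⟩ := h.cov x (convexHull_mono (by simp) hx) hg
    by_cases hps : p ∈ s
    · exfalso
      obtain ⟨a, b, hab, rfl⟩ := exists_edge c h hs hps
      have g := hE a b hab
      have hle : D a b x ≤ 0 := by
        refine D_nonpos_of_hull ?_ hx
        intro v hv
        by_cases hva : v = a
        · simp [hva]
        by_cases hvb : v = b
        · simp [hvb]
        exact (g.2.2.2 v hv hva hvb).le
      rw [mem_tri' g.2.2.1] at hxs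
      exact hg a (Finset.mem_of_mem_erase g.1) b (Finset.mem_of_mem_erase g.2.1)
        (ne_of_D g.2.2.1.ne').2.1 (le_antisymm hle hxs.2.1)
    · exact ⟨s, Finset.mem_filter.2 ⟨hs, hps⟩, hxs⟩
  refine ⟨?_, ?_, hcov, ?_, ?_⟩
  · intro s hs v hv
    obtain ⟨hs, hps⟩ := Finset.mem_filter.1 hs
    exact Finset.mem_erase.2 ⟨fun he => hps (he ▸ hv), h.sub s hs hv⟩
  · intro s hs
    exact h.card s (Finset.mem_filter.1 hs).1
  · intro x hg s hs t ht
    exact h.uniq x hg s (Finset.mem_filter.1 hs).1 t (Finset.mem_filter.1 ht).1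
  · intro v hv
    obtain ⟨s, hs, hvs⟩ := hull_subset_of_gen c.dim' (isClosed_union _) hcov
      (subset_convexHull ℝ _ hv)
    exact ⟨s, hs, h.empty c.gp subset_rfl (Finset.mem_filter.1 hs).1
      (Finset.mem_of_mem_erase hv) hvs⟩

/-- A link without flippable vertices is decoded from a tree without further subdivision. -/
lemma terminal (c : Ctx A p θ) (h : Tri A A F) {a₁ z : Plane} (ha₁ : a₁ ∈ A.erase p)
    (hmin : ∀ a ∈ A.erase p, θ a₁ ≤ θ a) (hz : z ∈ A.erase p)
    (hmax : ∀ a ∈ A.erase p, θ a ≤ θ z)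
    (hterm : ∀ a b d, (a, b) ∈ Ed A p F → (b, d) ∈ Ed A p F → D a b d < 0) :
    ∃ G t, Tri A (A.erase p) G ∧ (∀ s ∈ F, p ∉ s → s ∈ G) ∧
      Dec G (HE A p) z t a₁ (Ed A p F).val := by
  have hE : ∀ a b, (a, b) ∈ Ed A p F → HE A p a b := fun a b hab => he_of_mem c h hterm hab
  obtain ⟨s, hs, hps⟩ := h.vert p c.hp
  obtain ⟨a, b, hab, -⟩ := exists_edge c h hs hps
  obtain ⟨t, ht⟩ := exists_dec (G := F.filter (fun s => p ∉ s)) (E := HE A p) (z := z) θ _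
    (Ed A p F) a₁ rfl ⟨_, hab⟩ (fun q hq => ⟨c.lt_of_mem hq, hE _ _ hq⟩)
    (by
      intro x y hxy
      have g := mem_Ed.1 hxy
      by_cases hx : x = a₁
      · exact Or.inl hx
      · refine Or.inr (in_exists c h g.2.2.2 (by simp) (by simp) g.1 ha₁ ?_)
        rcases c.trichotomy g.1 ha₁ hx with h1 | h1
        · linarith [hmin x g.1]
        · exact h1)
    (by
      intro x y hxy
      have g := mem_Ed.1 hxy
      by_cases hy : y = z
      · exact Or.inl hy
      · refine Or.inr (out_exists c h g.2.2.2 (by simp) (by simp) g.2.1 hz ?_)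
        rcases c.trichotomy g.2.1 hz hy with h1 | h1
        · exact h1
        · linarith [hmax y g.2.1])
    (fun x y y' h1 h2 => out_unique c h h1 h2) (fun x x' y h1 h2 => in_unique c h h1 h2)
    (by
      rintro x y hxy rfl
      linarith [c.lt_of_mem hxy, hmin x (mem_Ed.1 hxy).1])
    (by
      rintro x y hxy rfl
      linarith [c.lt_of_mem hxy, hmax y (mem_Ed.1 hxy).2.1])
  exact ⟨_, t, tri_erase c h hE, fun s hs hps => Finset.mem_filter.2 ⟨hs, hps⟩, ht⟩

end
/-! ### The injection -/

section
variable {A : Finset Plane} {p : Plane} {θ : Plane → ℝ} {F G : Finset (Finset Plane)}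

/-- Every triangulation of `A` is obtained from a triangulation `G` of `A \ {p}` containing all its
triangles off `p`, together with a binary tree encoding the link of `p`. -/
lemma exists_code (c : Ctx A p θ) {a₁ z : Plane} (ha₁ : a₁ ∈ A.erase p)
    (hmin : ∀ a ∈ A.erase p, θ a₁ ≤ θ a) (hz : z ∈ A.erase p)
    (hmax : ∀ a ∈ A.erase p, θ a ≤ θ z) (h : Tri A A F) :
    ∃ G t, Tri A (A.erase p) G ∧ (∀ s ∈ F, p ∉ s → s ∈ G) ∧
      Dec G (HE A p) z t a₁ (Ed A p F).val := by
  induction hn : (Ed A p F).card using Nat.strong_induction_on generalizing F with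
  | _ n ih =>
    by_cases hterm : ∀ a b d, (a, b) ∈ Ed A p F → (b, d) ∈ Ed A p F → D a b d < 0
    · exact terminal c h ha₁ hmin hz hmax hterm
    push Not at hterm
    obtain ⟨a, b, d, hab, hbd, hD⟩ := hterm
    have g1 := mem_Ed.1 hab
    have g2 := mem_Ed.1 hbd
    have hlt1 := c.lt_of_mem hab
    have hlt2 := c.lt_of_mem hbd
    have hD : 0 < D a b d := by
      refine lt_of_le_of_ne hD (Ne.symm (D_ne c.gp (Finset.mem_of_mem_erase g1.1)
        (Finset.mem_of_mem_erase g1.2.1) (Finset.mem_of_mem_erase g2.2.1) ?_ ?_ ?_)) <;>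
      · rintro rfl; linarith
    have hbd' : (b, d) ∈ (Ed A p F).erase (a, b) := by
      refine Finset.mem_erase.2 ⟨?_, hbd⟩
      intro he
      obtain rfl : b = a := (Prod.ext_iff.1 he).1
      exact lt_irrefl _ hlt1
    have hval : (Ed A p F).val =
        (a, b) ::ₘ (b, d) ::ₘ (((Ed A p F).erase (a, b)).erase (b, d)).val := by
      rw [Finset.erase_val ((Ed A p F).erase (a, b)), Multiset.cons_erase hbd', Finset.erase_val,
        Multiset.cons_erase hab]
    have hnot : (a, d) ∉ ((Ed A p F).erase (a, b)).erase (b, d) := fun hm =>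
      flip_not_mem c h hab hbd (Finset.mem_of_mem_erase (Finset.mem_of_mem_erase hm))
    have hval' : (Ed A p (flip F p a b d)).val =
        (a, d) ::ₘ (((Ed A p F).erase (a, b)).erase (b, d)).val := by
      rw [flip_Ed c hab hbd, Finset.insert_val_of_notMem hnot]
    have hcard : (Ed A p (flip F p a b d)).card < n := by
      rw [← hn, Finset.card_def, Finset.card_def, hval, hval']
      simp
    obtain ⟨G, t, hG, hsub, hdec⟩ := ih _ hcard (flip_tri c h hab hbd hD) rfl
    rw [hval'] at hdec
    have hpn : p ∉ ({a, b, d} : Finset Plane) := by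
      have n1 := Finset.mem_erase.1 g1.1
      have n2 := Finset.mem_erase.1 g1.2.1
      have n3 := Finset.mem_erase.1 g2.2.1
      simp [n1.1.symm, n2.1.symm, n3.1.symm]
    obtain ⟨t', ht'⟩ := hdec.insert (hsub _ (mem_flip.2 (Or.inl (Or.inr rfl))) hpn) hD
    refine ⟨G, t', hG, fun s hs hps => hsub s (mem_flip.2 (Or.inr ⟨hs, ?_, ?_⟩)) hps, ?_⟩
    · rintro rfl; simp at hps
    · rintro rfl; simp at hps
    · rw [hval]; exact ht'

/-- A triangulation is determined by `G` and the link of `p`. -/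
lemma subset_of_code (c : Ctx A p θ) {F₁ F₂ : Finset (Finset Plane)} (h₁ : Tri A A F₁)
    (h₂ : Tri A A F₂) (hG : Tri A (A.erase p) G) (hs₁ : ∀ s ∈ F₁, p ∉ s → s ∈ G)
    (hs₂ : ∀ s ∈ F₂, p ∉ s → s ∈ G) (hEd : Ed A p F₁ = Ed A p F₂) : F₁ ⊆ F₂ := by
  intro s hs
  by_cases hps : p ∈ s
  · obtain ⟨a, b, hab, rfl⟩ := exists_edge c h₁ hs hps
    rw [hEd] at hab
    exact (mem_Ed.1 hab).2.2.2
  -- A generic point of `s` is not covered by a triangle of `F₂` at `p`, as this one is in `F₁`.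
  obtain ⟨x, hxs, hg⟩ := (dense_gen A).inter_open_nonempty _ isOpen_interior
    (interior_convexHull_nonempty_iff_affineSpan_eq_top.2
      (affineSpan_tri c.gp (h₁.sub s hs) (h₁.card s hs)))
  have hxs := interior_subset hxs
  obtain ⟨t, ht, hxt⟩ := h₂.cov x (convexHull_mono (by simpa using h₁.sub s hs) hxs) hg
  by_cases hpt : p ∈ t
  · exfalso
    obtain ⟨a, b, hab, rfl⟩ := exists_edge c h₂ ht hpt
    rw [← hEd] at hab
    rw [h₁.uniq x hg s hs _ (mem_Ed.1 hab).2.2.2 hxs hxt] at hps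
    exact hps hpt
  · rwa [hG.uniq x hg s (hs₁ s hs hps) t (hs₂ t ht hpt) hxs hxt]

/-- Around a boundary point the other points are linearly ordered by angle. -/
lemma exists_theta (hgen : InGeneralPosition A) (hp : p ∈ A)
    (hdim : affineSpan ℝ (A : Set Plane) = ⊤)
    (hpbd : p ∈ frontier (convexHull ℝ (A : Set Plane))) :
    ∃ θ : Plane → ℝ, ∀ a ∈ A.erase p, ∀ b ∈ A.erase p, (0 < D p a b ↔ θ a < θ b) := by
  -- A supporting line at `p` carries at most one further point, so `p` is an extreme point.
  have hout : p ∉ convexHull ℝ ((A.erase p : Finset Plane) : Set Plane) := by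
    intro hmem
    obtain ⟨f, hf, hle⟩ := geometric_hahn_banach_of_nonempty_interior_point
      (convex_convexHull ℝ (A : Set Plane)) hpbd.2
      (interior_convexHull_nonempty_iff_affineSpan_eq_top.2 hdim)
    have h1 := hull_face (fun v hv => hle v (subset_convexHull ℝ _
      (Finset.mem_of_mem_erase hv))) hmem rfl
    set L := (A.erase p).filter (fun v => f v = f p)
    have hL : L.card ≤ 1 := by
      rw [Finset.card_le_one]
      intro a ha b hb
      obtain ⟨ha, hfa⟩ := Finset.mem_filter.1 ha
      obtain ⟨hb, hfb⟩ := Finset.mem_filter.1 hb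
      have ha := Finset.mem_erase.1 ha
      have hb := Finset.mem_erase.1 hb
      by_contra hab
      exact D_ne hgen hp ha.2 hb.2 ha.1.symm hab hb.1.symm (D_eq_zero_of_level hf rfl hfa hfb)
    obtain ⟨a, ha⟩ := Finset.card_le_one_iff_subset_singleton.1 hL
    have h2 := convexHull_mono (Finset.coe_subset.2 ha) h1
    simp at h2
    have h3 : L.Nonempty := by
      rw [Finset.nonempty_iff_ne_empty]
      rintro h3
      rw [h3] at h1
      simp at h1
    obtain ⟨b, hb⟩ := h3
    have hba := Finset.mem_singleton.1 (ha hb)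
    exact (Finset.mem_erase.1 (Finset.mem_filter.1 hb).1).1 (by rw [hba, h2])
  obtain ⟨f, u, hfp, hfa⟩ := geometric_hahn_banach_point_closed (convex_convexHull ℝ _)
    ((A.erase p).finite_toSet.isClosed_convexHull ℝ) hout
  have hpos : ∀ a ∈ A.erase p, 0 < f a - f p := fun a ha => by
    linarith [hfa a (subset_convexHull ℝ _ ha)]
  set α := f (!₂[1, 0] : Plane) with hα
  set β := f (!₂[0, 1] : Plane) with hβ
  have hf : ∀ v : Plane, f v = α * v 0 + β * v 1 := by
    intro v
    have : v = v 0 • (!₂[1, 0] : Plane) + v 1 • (!₂[0, 1] : Plane) := by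
      ext i; fin_cases i <;> simp
    conv_lhs => rw [this]
    rw [map_add, map_smul, map_smul, smul_eq_mul, smul_eq_mul]
    ring
  refine ⟨fun a => (α * (a 1 - p 1) - β * (a 0 - p 0)) / (f a - f p), fun a ha b hb => ?_⟩
  have h0 : 0 < α ^ 2 + β ^ 2 := by
    by_contra hc
    have e1 : α = 0 := by nlinarith [sq_nonneg α, sq_nonneg β]
    have e2 : β = 0 := by nlinarith [sq_nonneg α, sq_nonneg β]
    have := hpos a ha
    rw [hf, hf, e1, e2] at this
    simp at this
  have key : (α * (b 1 - p 1) - β * (b 0 - p 0)) * (f a - f p) -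
      (α * (a 1 - p 1) - β * (a 0 - p 0)) * (f b - f p) = (α ^ 2 + β ^ 2) * D p a b := by
    rw [hf a, hf b, hf p]; unfold D; ring
  rw [div_lt_div_iff₀ (hpos a ha) (hpos b hb), iff_comm, ← sub_pos, key]
  exact mul_pos_iff_of_pos_left h0

lemma finite_triangulations (hdim : affineSpan ℝ (A : Set Plane) = ⊤) :
    Finite {T : SimplicialComplex ℝ Plane | IsTriangulation A T} := by
  have : Function.Injective (fun T : {T : SimplicialComplex ℝ Plane | IsTriangulation A T} =>
      (⟨tris A T.1, Finset.mem_powerset.2 (Finset.filter_subset _ _)⟩ :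
        {S // S ∈ (A.powersetCard 3).powerset})) := by
    intro T₁ T₂ h
    exact Subtype.ext (tris_inj hdim T₁.2 T₂.2 (Subtype.ext_iff.1 h))
  exact Finite.of_injective _ this

end
end BoundaryCount

open BoundaryCount in
theorem count_by_degree_boundary_point
    (A : Finset Plane)
    (hgen : InGeneralPosition A)
    (hdim : affineSpan ℝ (A : Set Plane) = ⊤)
    (p : Plane) (hp : p ∈ A)
    (hpbd : p ∈ frontier (convexHull ℝ (A : Set Plane)))
    (hdim' : affineSpan ℝ ((A.erase p : Finset Plane) : Set Plane) = ⊤)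
    (i : ℕ) (hi : 2 ≤ i) :
    Nat.card {T : SimplicialComplex ℝ Plane | IsTriangulation A T ∧ degree T p = i}
      ≤ catalan (i - 2) *
        Nat.card {T' : SimplicialComplex ℝ Plane | IsTriangulation (A.erase p) T'} := by
  obtain ⟨θ, hθ⟩ := exists_theta hgen hp hdim hpbd
  have c : Ctx A p θ := ⟨hgen, hp, hdim, hdim', hθ⟩
  have hne : (A.erase p).Nonempty := by
    rw [← Finset.card_pos]
    have := three_le_card hdim'
    omega
  obtain ⟨a₁, ha₁, hmin⟩ := Finset.exists_min_image _ θ hne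
  obtain ⟨z, hz, hmax⟩ := Finset.exists_max_image _ θ hne
  have hsub : A.erase p ⊆ A := Finset.erase_subset _ _
  have key : ∀ T : {T : SimplicialComplex ℝ Plane | IsTriangulation A T ∧ degree T p = i},
      ∃ q : BinaryTree.treesOfNumNodesEq (i - 2) ×
        {T' : SimplicialComplex ℝ Plane | IsTriangulation (A.erase p) T'},
      (∀ s ∈ tris A T.1, p ∉ s → s ∈ tris (A.erase p) q.2.1) ∧
      Dec (tris (A.erase p) q.2.1) (HE A p) z q.1.1 a₁ (Ed A p (tris A T.1)).val := by
    rintro ⟨T, hT, hdeg⟩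
    obtain ⟨G, t, hG, hs, hdec⟩ := exists_code c ha₁ hmin hz hmax
      (tri_of_triangulation hT hdim subset_rfl)
    obtain ⟨T', hT', rfl⟩ := exists_triangulation hG hgen hsub hdim'
    have hcard := hdec.card
    rw [degree_eq c hT hz hmax] at hdeg
    rw [Finset.card_val] at hcard
    exact ⟨⟨⟨t, BinaryTree.mem_treesOfNumNodesEq.2 (by omega)⟩, ⟨T', hT'⟩⟩, hs, hdec⟩
  choose Φ hΦ hdec using key
  have hinj : Function.Injective Φ := by
    rintro T₁ T₂ he
    have hs₁ := hΦ T₁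
    have hs₂ := hΦ T₂
    have hd₁ := hdec T₁
    have hd₂ := hdec T₂
    rw [he] at hs₁ hd₁
    have hG : Tri A (A.erase p) (tris (A.erase p) (Φ T₂).2.1) :=
      tri_of_triangulation (Φ T₂).2.2 hdim' hsub
    have hEd : Ed A p (tris A T₁.1) = Ed A p (tris A T₂.1) := by
      apply Finset.val_injective
      refine hd₁.unique ?_ (fun a b b' h h' => h.unique h') hd₂
      intro a b e e' h h' hD hD'
      rw [rot3] at h h'
      rw [← D_rot, ← D_rot] at hD hD'
      exact hG.same_side hgen hsub h h' hD hD'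
    have h₁ : Tri A A (tris A T₁.1) := tri_of_triangulation T₁.2.1 hdim subset_rfl
    have h₂ : Tri A A (tris A T₂.1) := tri_of_triangulation T₂.2.1 hdim subset_rfl
    exact Subtype.ext (tris_inj hdim T₁.2.1 T₂.2.1 (Finset.Subset.antisymm
      (subset_of_code c h₁ h₂ hG hs₁ hs₂ hEd) (subset_of_code c h₂ h₁ hG hs₂ hs₁ hEd.symm)))
  have := finite_triangulations hdim'
  have hle := Nat.card_le_card_of_injective Φ hinj
  rwa [Nat.card_prod, Nat.card_eq_finsetCard, BinaryTree.treesOfNumNodesEq_card_eq_catalan] at hle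
end

section
/- For every integer i ≥ 3, the Catalan numbers satisfy (2i−3)·(C_{i−1} − C_{i−2}) = 3·binom(2i−3, i−3). -/
/-!
Put `i = m + 3`. The ratio of consecutive Catalan numbers gives
`(m + 3) * (C_{m+2} - C_{m+1}) = 3 * (m + 1) * C_{m+1}`. On the other side, absorption gives
`(m + 3) * binom(2m+3, m) = (2m + 3) * binom(2m+2, m)`, and `binom(2m+2, m) = (m + 1) * C_{m+1}`
by comparison with the central binomial coefficient. Hence the two sides of the identity agree
after multiplication by `m + 3`.
-/

theorem add_two_mul_catalan_succ (n : ℕ) :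
    (n + 2) * catalan (n + 1) = 2 * (2 * n + 1) * catalan n := by
  have h1 : (n + 2) * catalan (n + 1) = (n + 1).centralBinom :=
    succ_mul_catalan_eq_centralBinom (n + 1)
  have h0 := succ_mul_catalan_eq_centralBinom n
  have h := Nat.succ_mul_centralBinom_succ n
  rw [← h1, ← h0] at h
  apply Nat.eq_of_mul_eq_mul_left n.succ_pos
  simp only [Nat.succ_eq_add_one]
  linarith

theorem choose_two_mul_add_two (m : ℕ) :
    (2 * m + 2).choose m = (m + 1) * catalan (m + 1) := by
  have h := Nat.choose_succ_right_eq (2 * m + 2) m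
  have hc : (m + 2) * catalan (m + 1) = (2 * m + 2).choose (m + 1) :=
    succ_mul_catalan_eq_centralBinom (m + 1)
  rw [← hc, show 2 * m + 2 - m = m + 2 by omega] at h
  apply Nat.eq_of_mul_eq_mul_right (show 0 < m + 2 by omega)
  linarith

theorem catalan_difference_identity (i : ℕ) (hi : 3 ≤ i) :
    (2 * i - 3) * (catalan (i - 1) - catalan (i - 2)) = 3 * Nat.choose (2 * i - 3) (i - 3) := by
  obtain ⟨m, rfl⟩ := Nat.exists_eq_add_of_le' hi
  rw [show 2 * (m + 3) - 3 = 2 * m + 3 by omega, show m + 3 - 1 = m + 2 by omega,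
    show m + 3 - 2 = m + 1 by omega, show m + 3 - 3 = m by omega]
  have hr : (m + 3) * catalan (m + 2) = 2 * (2 * (m + 1) + 1) * catalan (m + 1) :=
    add_two_mul_catalan_succ (m + 1)
  -- Monotonicity makes the natural-number subtraction a genuine difference.
  have hle : catalan (m + 1) ≤ catalan (m + 2) := by
    apply Nat.le_of_mul_le_mul_left _ (show 0 < m + 3 by omega)
    rw [hr]
    exact Nat.mul_le_mul_right _ (by omega)
  obtain ⟨d, hd⟩ := Nat.exists_eq_add_of_le hle
  rw [hd] at hr ⊢
  rw [Nat.add_sub_cancel_left]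
  have hdiff : (m + 3) * d = 3 * (m + 1) * catalan (m + 1) := by linarith
  have hb := Nat.choose_mul_succ_eq (2 * m + 2) m
  rw [choose_two_mul_add_two, show 2 * m + 2 + 1 - m = m + 3 by omega] at hb
  apply Nat.eq_of_mul_eq_mul_left (show 0 < m + 3 by omega)
  calc (m + 3) * ((2 * m + 3) * d) = (2 * m + 3) * ((m + 3) * d) := by ring
    _ = 3 * ((m + 1) * catalan (m + 1) * (2 * m + 2 + 1)) := by rw [hdiff]; ring
    _ = (m + 3) * (3 * (2 * m + 3).choose m) := by rw [hb]; ring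
end

section
/- For every integer k ≥ 1, the alternating sum ∑_{i=0}^{k} (−1)^i · binom(k, i) · C_{2k−i−2} is at most 12^k, where the sum is taken in the integers and C_m denotes the m-th Catalan number. -/
/-!
For `k ≥ 2` the sum is the `k`-th forward difference of the Catalan sequence at `k - 2`. The Catalan
numbers are moments: `C_m = (J ^ m) 0 0`, where `J` is the infinite tridiagonal matrix with diagonal
`1, 2, 2, …` and off-diagonal entries `1` (the Jacobi matrix of the Marchenko–Pastur law). Taking
one forward difference multiplies by `J - 1`, so the sum equals `(J ^ (k - 2) * (J - 1) ^ k) 0 0`.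
Both `J` and `J - 1` have nonnegative entries, with row sums at most `4` and `3` respectively; hence
the sum lies between `0` and `4 ^ (k - 2) * 3 ^ k ≤ 12 ^ k`.

The first columns of the powers of `J` are ballot numbers (`ballot`, `ballot_succ`,
`ballot_zero_right`), and `fwdDiff_ballot` carries the recursion and the bounds through
iterated differences.
-/

/-- The tridiagonal matrix with diagonal `1, 2, 2, …` and off-diagonal entries `1`, acting on
integer sequences. -/
def jacobi (f : ℕ → ℤ) : ℕ → ℤ
  | 0 => f 0 + f 1
  | n + 1 => f n + 2 * f (n + 1) + f (n + 2)

/-- The ballot number `binom(2m, m+n) - binom(2m, m+n+1)`, which is the entry `(n, 0)` of the `m`-th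
power of the matrix of `jacobi`. -/
def ballot (m n : ℕ) : ℤ :=
  ((2 * m).choose (m + n) : ℤ) - ((2 * m).choose (m + n + 1) : ℤ)

lemma jacobi_sub (f g : ℕ → ℤ) : jacobi (f - g) = jacobi f - jacobi g := by
  funext n
  cases n <;> simp only [jacobi, Pi.sub_apply] <;> ring

lemma choose_add_two (a b : ℕ) :
    (a + 2).choose (b + 2) = a.choose b + 2 * a.choose (b + 1) + a.choose (b + 2) := by
  rw [Nat.choose_succ_succ' (a + 1), Nat.choose_succ_succ' a b, Nat.choose_succ_succ' a (b + 1)]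
  ring

lemma ballot_succ (m : ℕ) : ballot (m + 1) = jacobi (ballot m) := by
  funext n
  rcases n with _ | n
  · rcases m with _ | m
    · simp [ballot, jacobi]
    · -- Reflection across the centre of the row: this produces the diagonal entry `1` of `jacobi`.
      have hs : (2 * (m + 1)).choose m = (2 * (m + 1)).choose (m + 2) :=
        Nat.choose_symm_of_eq_add (by ring)
      have h1 := choose_add_two (2 * (m + 1)) m
      have h2 := choose_add_two (2 * (m + 1)) (m + 1)
      simp only [ballot, jacobi]
      rw [show 2 * (m + 1 + 1) = 2 * (m + 1) + 2 by ring,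
        show m + 1 + 1 + 0 = m + 2 by ring, show m + 2 + 1 = m + 1 + 2 by ring, h1, h2, hs,
        show m + 1 + 0 = m + 1 by ring, show m + 1 + 2 = m + 3 by ring,
        show m + 1 + 1 + 1 = m + 3 by ring, show m + 1 + 1 = m + 2 by ring]
      push_cast
      ring
  · have h1 := choose_add_two (2 * m) (m + n)
    have h2 := choose_add_two (2 * m) (m + n + 1)
    simp only [ballot, jacobi]
    rw [show 2 * (m + 1) = 2 * m + 2 by ring,
      show m + 1 + (n + 1) = m + n + 2 by ring, show m + n + 2 + 1 = m + n + 1 + 2 by ring, h1, h2,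
      ← add_assoc, ← add_assoc]
    push_cast
    ring

lemma ballot_zero_right (m : ℕ) : ballot m 0 = catalan m := by
  have h1 := succ_mul_catalan_eq_centralBinom m
  have h2 := Nat.choose_succ_right_eq (2 * m) m
  rw [show 2 * m - m = m by omega, ← Nat.centralBinom_eq_two_mul_choose] at h2
  simp only [ballot, add_zero, ← Nat.centralBinom_eq_two_mul_choose]
  zify at h1 h2
  have h3 : ((m : ℤ) + 1) ≠ 0 := by positivity
  apply mul_left_cancel₀ h3
  linarith

lemma ballot_bounds (m n : ℕ) : 0 ≤ ballot m n ∧ ballot m n ≤ 4 ^ m := by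
  induction m generalizing n with
  | zero => cases n <;> simp [ballot]
  | succ m ih =>
    rw [ballot_succ, pow_succ]
    rcases n with _ | n
    · have h0 := ih 0
      have h1 := ih 1
      simp only [jacobi]
      constructor <;> linarith
    · have h0 := ih n
      have h1 := ih (n + 1)
      have h2 := ih (n + 2)
      simp only [jacobi]
      constructor <;> linarith

/-- Taking a forward difference in `m` applies `jacobi - 1`, which has nonnegative entries and row
sums at most `3`, and the recursion by `jacobi` persists because `jacobi` is additive. -/
lemma fwdDiff_ballot (j : ℕ) :
    (∀ m, (fwdDiff 1)^[j] ballot (m + 1) = jacobi ((fwdDiff 1)^[j] ballot m)) ∧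
    ∀ m n, 0 ≤ (fwdDiff 1)^[j] ballot m n ∧ (fwdDiff 1)^[j] ballot m n ≤ 4 ^ m * 3 ^ j := by
  induction j with
  | zero => exact ⟨ballot_succ, fun m n => by simpa using ballot_bounds m n⟩
  | succ j ih =>
    obtain ⟨hrec, hb⟩ := ih
    simp only [Function.iterate_succ_apply', fwdDiff]
    refine ⟨fun m => ?_, fun m n => ?_⟩
    · rw [jacobi_sub, ← hrec, ← hrec]
    · rw [hrec, Pi.sub_apply, pow_succ]
      rcases n with _ | n
      · have h0 := hb m 0
        have h1 := hb m 1
        simp only [jacobi]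
        constructor <;> linarith
      · have h0 := hb m n
        have h1 := hb m (n + 1)
        have h2 := hb m (n + 2)
        simp only [jacobi]
        constructor <;> linarith

theorem double_circle_alternating_sum_le (k : ℕ) (hk : 1 ≤ k) :
    ∑ i ∈ Finset.range (k + 1),
        (-1 : ℤ) ^ i * (k.choose i : ℤ) * (catalan (2 * k - i - 2) : ℤ)
      ≤ 12 ^ k := by
  -- At `k = 1`, `i = 1` the index `2k - i - 2 = -1` truncates to `0`, so this case is separate.
  obtain rfl | hk2 : k = 1 ∨ 2 ≤ k := by omega
  · simp [Finset.sum_range_succ]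
  obtain ⟨m, rfl⟩ := Nat.exists_eq_add_of_le' hk2
  have hsum : ∑ i ∈ Finset.range (m + 2 + 1),
      (-1 : ℤ) ^ i * ((m + 2).choose i : ℤ) * (catalan (2 * (m + 2) - i - 2) : ℤ)
      = (fwdDiff 1)^[m + 2] ballot m 0 := by
    rw [fwdDiff_iter_eq_sum_shift, Finset.sum_apply, ← Finset.sum_range_reflect]
    refine Finset.sum_congr rfl fun i hi => ?_
    have hi' : i ≤ m + 2 := by simpa [Nat.lt_succ_iff] using hi
    rw [show m + 2 + 1 - 1 - i = m + 2 - i by omega, Nat.choose_symm hi',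
      show 2 * (m + 2) - (m + 2 - i) - 2 = m + i by omega]
    simp [ballot_zero_right]
  rw [hsum]
  calc (fwdDiff 1)^[m + 2] ballot m 0 ≤ 4 ^ m * 3 ^ (m + 2) := ((fwdDiff_ballot (m + 2)).2 m 0).2
    _ ≤ 4 ^ (m + 2) * 3 ^ (m + 2) := by gcongr <;> norm_num
    _ = 12 ^ (m + 2) := by rw [← mul_pow]; norm_num
end
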